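/- arXiv:math/0411260 — 2 statements merged into one kernel-verified Lean document; each statement's English description precedes it below -/
import Mathlib

section
/- Let M be a connected matroid of rank r on [n] with n ≥ 2, and let 𝓖_min be the family of all nonempty flats G of M such that the restriction M|G is a connected matroid (so [n] ∈ 𝓖_min). Then the following are equivalent: (a) for all flats F ⊊ G of M such that M|G is connected, the contraction (M|G)/F is a connected matroid; (b) for every subset S of 𝓖_min containing [n] that is nested with respect to 𝓖_min, and for every w = Σ_{G∈S, G≠[n]} c_G e_G with all c_G > 0, the matroid M_w has exactly |S| connected components. (Condition (b) expresses that the nested set complex N(L_M, 𝓖_min) equals the Bergman complex B(M).) -/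
open Finset Pointwise

/-- The 0/1 indicator vector (in `ℝ^n`) of a finite set of coordinates. -/
def indVec {n : ℕ} (S : Finset (Fin n)) : Fin n → ℝ := fun i => if i ∈ S then 1 else 0

/-- Independence with respect to a family `𝔅` of bases: being contained in a basis. -/
def FamIndep {n : ℕ} (𝔅 : Finset (Finset (Fin n))) (I : Finset (Fin n)) : Prop :=
  ∃ B ∈ 𝔅, I ⊆ B

/-- Circuits of the family `𝔅`: minimal dependent sets. -/
def FamCircuit {n : ℕ} (𝔅 : Finset (Finset (Fin n))) (C : Finset (Fin n)) : Prop :=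
  ¬ FamIndep 𝔅 C ∧ ∀ D ⊂ C, FamIndep 𝔅 D

open scoped Classical in
/-- The rank of a set: maximal cardinality of an independent subset. -/
noncomputable def famRk {n : ℕ} (𝔅 : Finset (Finset (Fin n))) (F : Finset (Fin n)) : ℕ :=
  (F.powerset.filter (fun I => FamIndep 𝔅 I)).sup Finset.card

open scoped Classical in
/-- The bases of the restriction to `F`: the maximal independent subsets of `F`. -/
noncomputable def famRestrictBases {n : ℕ} (𝔅 : Finset (Finset (Fin n)))
    (F : Finset (Fin n)) : Finset (Finset (Fin n)) :=
  F.powerset.filter fun B =>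
    FamIndep 𝔅 B ∧ ∀ B' ⊆ F, FamIndep 𝔅 B' → B ⊆ B' → B = B'

open scoped Classical in
/-- The bases of the contraction by `F`: the sets `B \ F` where `B` is a basis meeting `F`
in a set of full rank `rk F`. -/
noncomputable def famContractBases {n : ℕ} (𝔅 : Finset (Finset (Fin n)))
    (F : Finset (Fin n)) : Finset (Finset (Fin n)) :=
  (𝔅.filter fun B => (B ∩ F).card = famRk 𝔅 F).image (· \ F)

/-- `i` and `j` are related if equal or contained in a common circuit. -/
def FamConnRel {n : ℕ} (𝔅 : Finset (Finset (Fin n))) (i j : Fin n) : Prop :=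
  i = j ∨ ∃ C, FamCircuit 𝔅 C ∧ i ∈ C ∧ j ∈ C

/-- Number of connected components: number of classes of the equivalence relation
generated by `FamConnRel`. -/
noncomputable def famNumComponents {n : ℕ} (𝔅 : Finset (Finset (Fin n))) : ℕ :=
  Nat.card (Quot (FamConnRel 𝔅))

/-- Connectedness of the matroid presented by bases `𝔅` on the ground set `E`:
any two distinct elements of `E` lie in a common circuit (within `E`). -/
def FamConnectedOn {n : ℕ} (𝔅 : Finset (Finset (Fin n))) (E : Finset (Fin n)) : Prop :=
  ∀ i ∈ E, ∀ j ∈ E, i ≠ j → ∃ C, C ⊆ E ∧ FamCircuit 𝔅 C ∧ i ∈ C ∧ j ∈ C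

/-- A matroid of rank `r` on the ground set `Fin n`, given by its collection of bases:
`r`-element sets satisfying the basis exchange axiom. -/
structure FinMatroid (n r : ℕ) where
  bases : Finset (Finset (Fin n))
  bases_nonempty : bases.Nonempty
  card_bases : ∀ B ∈ bases, B.card = r
  exchange : ∀ B₁ ∈ bases, ∀ B₂ ∈ bases, ∀ i ∈ B₁ \ B₂,
      ∃ j ∈ B₂ \ B₁, insert j (B₁.erase i) ∈ bases

namespace FinMatroid

variable {n r : ℕ}

def Indep (M : FinMatroid n r) (I : Finset (Fin n)) : Prop := FamIndep M.bases I

def IsCircuit (M : FinMatroid n r) (C : Finset (Fin n)) : Prop := FamCircuit M.bases C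

noncomputable def rk (M : FinMatroid n r) (F : Finset (Fin n)) : ℕ := famRk M.bases F

/-- A flat: no circuit leaves exactly one element outside `F`. -/
def IsFlat (M : FinMatroid n r) (F : Finset (Fin n)) : Prop :=
  ∀ C, M.IsCircuit C → (C \ F).card ≠ 1

open scoped Classical in
/-- Closure of a set: the intersection of all flats containing it (the smallest flat
containing it). -/
noncomputable def closure (M : FinMatroid n r) (S : Finset (Fin n)) : Finset (Fin n) :=
  Finset.univ.filter fun i => ∀ F, M.IsFlat F → S ⊆ F → i ∈ F

/-- No single element is dependent. -/
def Loopless (M : FinMatroid n r) : Prop := ∀ i : Fin n, M.Indep {i}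

noncomputable def numComponents (M : FinMatroid n r) : ℕ := famNumComponents M.bases

/-- Any two distinct elements lie in a common circuit. -/
def Connected (M : FinMatroid n r) : Prop :=
  ∀ i j : Fin n, i ≠ j → ∃ C, M.IsCircuit C ∧ i ∈ C ∧ j ∈ C

/-- `B` is a `w`-maximal basis of `M`. -/
def IsMaxBasis (M : FinMatroid n r) (w : Fin n → ℝ) (B : Finset (Fin n)) : Prop :=
  B ∈ M.bases ∧ ∀ B' ∈ M.bases, ∑ i ∈ B', w i ≤ ∑ i ∈ B, w i

open scoped Classical in
/-- The bases of the matroid `M_w`: the `w`-maximal bases of `M`. -/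
noncomputable def maxBases (M : FinMatroid n r) (w : Fin n → ℝ) :
    Finset (Finset (Fin n)) :=
  M.bases.filter fun B => ∀ B' ∈ M.bases, ∑ i ∈ B', w i ≤ ∑ i ∈ B, w i

/-- Membership in the Bergman fan: on every circuit the minimum of `w` is attained
at least twice. -/
def InBergmanFan (M : FinMatroid n r) (w : Fin n → ℝ) : Prop :=
  ∀ C, M.IsCircuit C → ∃ i ∈ C, ∃ j ∈ C, i ≠ j ∧ w i = w j ∧ ∀ k ∈ C, w i ≤ w k

/-- The matroid polytope: convex hull of the indicator vectors of the bases. -/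
noncomputable def polytope (M : FinMatroid n r) : Set (Fin n → ℝ) :=
  convexHull ℝ (indVec '' ↑M.bases)

noncomputable def restrictBases (M : FinMatroid n r) (F : Finset (Fin n)) :
    Finset (Finset (Fin n)) :=
  famRestrictBases M.bases F

noncomputable def contractBases (M : FinMatroid n r) (F : Finset (Fin n)) :
    Finset (Finset (Fin n)) :=
  famContractBases M.bases F

/-- `𝓖` is a building set in the lattice of flats of `M` (with bottom element `∅` and
join = closure of union): for every nonempty flat `X`, the join map is an order
isomorphism from the product of the lower intervals of the maximal elements of
`𝓖` below `X` onto the lower interval of `X`. -/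
def IsFlatBuilding (M : FinMatroid n r) (𝓖 : Set (Finset (Fin n))) : Prop :=
  (∀ F ∈ 𝓖, M.IsFlat F ∧ F ≠ ∅) ∧
  ∀ X, M.IsFlat X → X ≠ ∅ →
    ∃ (k : ℕ) (g : Fin k → Finset (Fin n)),
      Function.Injective g ∧
      (∀ i, g i ∈ 𝓖 ∧ g i ⊆ X) ∧
      (∀ i, ∀ H ∈ 𝓖, H ⊆ X → g i ⊆ H → g i = H) ∧
      (∀ H ∈ 𝓖, H ⊆ X → ∃ i, H ⊆ g i) ∧
      ∃ e : (∀ i : Fin k, {F : Finset (Fin n) // M.IsFlat F ∧ F ⊆ g i}) ≃o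
              {F : Finset (Fin n) // M.IsFlat F ∧ F ⊆ X},
        ∀ y, (e y).1 = M.closure (Finset.univ.sup fun i => (y i).1)

/-- `S` is nested with respect to `𝓖` (in the lattice of flats of `M`): `S ⊆ 𝓖` and for
every subcollection of at least two pairwise incomparable members, their join (the
closure of their union) is not in `𝓖`. -/
def IsNested (M : FinMatroid n r) (𝓖 : Set (Finset (Fin n)))
    (S : Finset (Finset (Fin n))) : Prop :=
  ↑S ⊆ 𝓖 ∧ ∀ T ⊆ S, 2 ≤ T.card →
    (∀ A ∈ T, ∀ B ∈ T, A ≠ B → ¬ A ⊆ B ∧ ¬ B ⊆ A) →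
    M.closure (T.sup id) ∉ 𝓖

end FinMatroid

/-- A building set in the Boolean lattice of subsets of `Fin r`: for every nonempty
`X ⊆ [r]`, the union map is an order isomorphism from the product of the lower
intervals of the maximal elements of `𝓕` below `X` onto the lower interval of `X`. -/
def BoolBuilding {r : ℕ} (𝓕 : Set (Finset (Fin r))) : Prop :=
  (∀ F ∈ 𝓕, F ≠ ∅) ∧
  ∀ X : Finset (Fin r), X ≠ ∅ →
    ∃ (k : ℕ) (g : Fin k → Finset (Fin r)),
      Function.Injective g ∧
      (∀ i, g i ∈ 𝓕 ∧ g i ⊆ X) ∧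
      (∀ i, ∀ H ∈ 𝓕, H ⊆ X → g i ⊆ H → g i = H) ∧
      (∀ H ∈ 𝓕, H ⊆ X → ∃ i, H ⊆ g i) ∧
      ∃ e : (∀ i : Fin k, {F : Finset (Fin r) // F ⊆ g i}) ≃o
              {F : Finset (Fin r) // F ⊆ X},
        ∀ y, (e y).1 = Finset.univ.sup fun i => (y i).1

/-- `S` is nested with respect to `𝓕` in the Boolean lattice: for every subcollection
of at least two pairwise incomparable members, their union is not in `𝓕`. -/
def BoolNested {r : ℕ} (𝓕 : Set (Finset (Fin r))) (S : Finset (Finset (Fin r))) : Prop :=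
  ↑S ⊆ 𝓕 ∧ ∀ T ⊆ S, 2 ≤ T.card →
    (∀ A ∈ T, ∀ B ∈ T, A ≠ B → ¬ A ⊆ B ∧ ¬ B ⊆ A) →
    T.sup id ∉ 𝓕

/-- The simplex `Δ_F = conv{e_i : i ∈ F}`. -/
noncomputable def faceSimplex {r : ℕ} (F : Finset (Fin r)) : Set (Fin r → ℝ) :=
  convexHull ℝ ((fun i => (Pi.single i 1 : Fin r → ℝ)) '' ↑F)

/-- The Minkowski sum `Δ_𝓕 = Σ_{F ∈ 𝓕} Δ_F`. -/
noncomputable def minkSum {r : ℕ} (𝓕 : Finset (Finset (Fin r))) : Set (Fin r → ℝ) :=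
  ∑ F ∈ 𝓕, faceSimplex F

/-!
For `S` nested with `[n] ∈ S` and `w = ∑ c_G e_G`, the weight of a basis `B` is
`∑ c_G |B ∩ G|`, and some basis attains `|B ∩ G| = rk G` for all `G ∈ S` simultaneously. Hence `M_w`
does not depend on the coefficients: it is the direct sum over `G ∈ S` of the minors `(M|G)/F_G`,
where `F_G` is the union of the members of `S` strictly below `G`. By nestedness `F_G` is a proper
flat of `G`, and the sets `G \ F_G` partition `[n]`, so `M_w` has `|S|` connected components exactly
when each of these minors is connected. Conversely, for flats `F ⊊ G` with `M|G` connected, the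
family consisting of `[n]`, `G` and the connected components of `M|F` is nested and `F_G = F`.
-/

open scoped Matroid

section Connectivity

variable {α : Type*} {N : Matroid α} {C C₁ C₂ X Y : Set α} {x y z : α}

theorem exists_isCircuit_mem_or_union_ssubset (h₁ : N.IsCircuit C₁) (h₂ : N.IsCircuit C₂)
    (hx : x ∈ C₁) (hz : z ∈ C₂) (hxC₂ : x ∉ C₂) (hy₁ : y ∈ C₁) (hy₂ : y ∈ C₂) :
    (∃ C ⊆ C₁ ∪ C₂, N.IsCircuit C ∧ x ∈ C ∧ z ∈ C) ∨
      ∃ C, N.IsCircuit C ∧ z ∈ C ∧ (C₁ ∩ C).Nonempty ∧ C₁ ∪ C ⊂ C₁ ∪ C₂ := by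
  obtain ⟨C₃, hC₃, h₃, hx₃⟩ := h₁.strong_elimination h₂ hy₁ hy₂ hx hxC₂
  have hC₃' : C₃ ⊆ C₁ ∪ C₂ := hC₃.trans Set.sdiff_subset
  by_cases hz₃ : z ∈ C₃
  · exact .inl ⟨C₃, hC₃', h₃, hx₃, hz₃⟩
  obtain ⟨u, hu₃, hu₁⟩ : ∃ u ∈ C₃, u ∉ C₁ := Set.not_subset.1 fun h =>
    (hC₃ (h₃.eq_of_subset_isCircuit h₁ h ▸ hy₁)).2 rfl
  have hu₂ : u ∈ C₂ := (hC₃' hu₃).resolve_left hu₁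
  obtain ⟨C₄, hC₄, h₄, hz₄⟩ := h₂.strong_elimination h₃ hu₂ hu₃ hz hz₃
  obtain ⟨v, hv₄, hv₂⟩ : ∃ v ∈ C₄, v ∉ C₂ := Set.not_subset.1 fun h =>
    (hC₄ (h₄.eq_of_subset_isCircuit h₂ h ▸ hu₂)).2 rfl
  have hv₁ : v ∈ C₁ := (hC₃' ((hC₄ hv₄).1.resolve_left hv₂)).resolve_right hv₂
  refine .inr ⟨C₄, h₄, hz₄, ⟨v, hv₁, hv₄⟩, (Set.ssubset_iff_of_subset ?_).2 ⟨u, .inr hu₂, ?_⟩⟩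
  · exact Set.union_subset Set.subset_union_left
      ((hC₄.trans Set.sdiff_subset).trans (Set.union_subset Set.subset_union_right hC₃'))
  · rintro (hu | hu)
    exacts [hu₁ hu, (hC₄ hu).2 rfl]

theorem exists_isCircuit_subset_union [N.Finitary] (h₁ : N.IsCircuit C₁) (h₂ : N.IsCircuit C₂)
    (hx : x ∈ C₁) (hz : z ∈ C₂) (hne : (C₁ ∩ C₂).Nonempty) :
    ∃ C ⊆ C₁ ∪ C₂, N.IsCircuit C ∧ x ∈ C ∧ z ∈ C := by
  induction hk : (C₁ ∪ C₂).ncard using Nat.strong_induction_on generalizing C₂ with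
  | _ k ih =>
    subst hk
    by_cases hxC₂ : x ∈ C₂
    · exact ⟨C₂, Set.subset_union_right, h₂, hxC₂, hz⟩
    obtain ⟨y, hy₁, hy₂⟩ := hne
    obtain h | ⟨C₃, h₃, hz₃, hne₃, hss⟩ :=
      exists_isCircuit_mem_or_union_ssubset h₁ h₂ hx hz hxC₂ hy₁ hy₂
    · exact h
    · obtain ⟨C, hC, h⟩ :=
        ih _ (Set.ncard_lt_ncard hss (h₁.finite.union h₂.finite)) h₃ hz₃ hne₃ rfl
      exact ⟨C, hC.trans hss.subset, h⟩

/-- Two elements of a matroid are connected if they are equal or lie in a common circuit. -/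
def CircuitRel (N : Matroid α) (x y : α) : Prop :=
  x = y ∨ ∃ C, N.IsCircuit C ∧ x ∈ C ∧ y ∈ C

/-- A matroid is connected if any two elements of its ground set are connected.
Connectedness of a set `X` in `N` is expressed as `CircuitConnected (N ↾ X)`. -/
def CircuitConnected (N : Matroid α) : Prop :=
  ∀ x ∈ N.E, ∀ y ∈ N.E, CircuitRel N x y

/-- The connected component of `x` in `N`. -/
def circuitComponent (N : Matroid α) (x : α) : Set α :=
  {y ∈ N.E | CircuitRel N x y}

theorem CircuitRel.symm (h : CircuitRel N x y) : CircuitRel N y x :=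
  h.imp Eq.symm fun ⟨C, hC, hx, hy⟩ => ⟨C, hC, hy, hx⟩

theorem CircuitRel.trans [N.Finitary] (hxy : CircuitRel N x y) (hyz : CircuitRel N y z) :
    CircuitRel N x z := by
  obtain rfl | ⟨C₁, h₁, hx, hy₁⟩ := hxy
  · exact hyz
  obtain rfl | ⟨C₂, h₂, hy₂, hz⟩ := hyz
  · exact .inr ⟨C₁, h₁, hx, hy₁⟩
  obtain ⟨C, -, hC⟩ := exists_isCircuit_subset_union h₁ h₂ hx hz ⟨y, hy₁, hy₂⟩
  exact .inr ⟨C, hC⟩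

theorem circuitRel_equivalence (N : Matroid α) [N.Finitary] : Equivalence (CircuitRel N) :=
  ⟨fun _ => .inl rfl, .symm, .trans⟩

theorem CircuitRel.of_restrict (hX : X ⊆ N.E) (h : CircuitRel (N ↾ X) x y) : CircuitRel N x y :=
  h.imp_right fun ⟨C, hC, hx, hy⟩ => ⟨C, ((Matroid.restrict_isCircuit_iff hX).1 hC).1, hx, hy⟩

theorem mem_circuitComponent_self (hx : x ∈ N.E) : x ∈ circuitComponent N x :=
  ⟨hx, .inl rfl⟩

theorem circuitComponent_subset_ground : circuitComponent N x ⊆ N.E :=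
  fun _ h => h.1

theorem CircuitConnected.subset_circuitComponent [N.Finitary] (hY : CircuitConnected (N ↾ Y))
    (hYE : Y ⊆ N.E) (hy : y ∈ Y) (hyx : y ∈ circuitComponent N x) : Y ⊆ circuitComponent N x :=
  fun _ hz => ⟨hYE hz, hyx.2.trans ((hY y hy _ hz).of_restrict hYE)⟩

theorem circuitConnected_restrict_isCircuit (hC : N.IsCircuit C) : CircuitConnected (N ↾ C) :=
  fun _ hx _ hy => .inr ⟨C, hC.isCircuit_restrict_of_subset subset_rfl, hx, hy⟩

theorem circuitConnected_restrict_circuitComponent [N.Finitary] :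
    CircuitConnected (N ↾ circuitComponent N x) := by
  intro y hy z hz
  refine (hy.2.symm.trans hz.2).imp_right fun ⟨C, hC, hyC, hzC⟩ =>
    ⟨C, hC.isCircuit_restrict_of_subset ?_, hyC, hzC⟩
  exact (circuitConnected_restrict_isCircuit hC).subset_circuitComponent hC.subset_ground hyC hy

theorem CircuitConnected.loopless (hN : CircuitConnected N) (hE : N.E.Nontrivial) :
    N.Loopless := by
  refine Matroid.loopless_iff_forall_isCircuit.2 fun C hC => ?_
  by_contra hCs
  obtain ⟨e, rfl⟩ : ∃ e, C = {e} :=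
    (Set.not_nontrivial_iff.1 hCs).eq_empty_or_singleton.resolve_left hC.nonempty.ne_empty
  obtain ⟨f, hf, hfe⟩ := hE.exists_ne e
  obtain rfl | ⟨D, hD, heD, hfD⟩ := hN e (hC.subset_ground rfl) f hf
  · exact hfe rfl
  · rw [← hC.eq_of_subset_isCircuit hD (Set.singleton_subset_iff.2 heD)] at hfD
    exact hfe hfD

theorem circuitComponent_restrict_subset : circuitComponent (N ↾ X) x ⊆ X :=
  circuitComponent_subset_ground

theorem circuitConnected_restrict_circuitComponent_restrict [N.Finitary] :
    CircuitConnected (N ↾ circuitComponent (N ↾ X) x) := by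
  rw [← N.restrict_restrict_eq circuitComponent_restrict_subset]
  exact circuitConnected_restrict_circuitComponent

theorem CircuitConnected.subset_circuitComponent_restrict [N.Finitary]
    (hY : CircuitConnected (N ↾ Y)) (hYX : Y ⊆ X) (hy : y ∈ Y)
    (hyx : y ∈ circuitComponent (N ↾ X) x) : Y ⊆ circuitComponent (N ↾ X) x := by
  rw [← N.restrict_restrict_eq hYX] at hY
  exact hY.subset_circuitComponent hYX hy hyx

theorem closure_inter_circuitComponent_subset [N.Finitary] (hYX : Y ⊆ X) :
    N.closure Y ∩ circuitComponent (N ↾ X) x ⊆ N.closure (circuitComponent (N ↾ X) x ∩ Y) := by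
  rintro e ⟨heY, he⟩
  by_cases heY' : e ∈ Y
  · exact N.mem_closure_of_mem' ⟨he, heY'⟩ (N.closure_subset_ground Y heY)
  obtain ⟨C, hCY, hC, heC⟩ := Matroid.exists_isCircuit_of_mem_closure heY heY'
  have hCX : C ⊆ X := hCY.trans (Set.insert_subset he.1 hYX)
  have hCK := (circuitConnected_restrict_isCircuit hC).subset_circuitComponent_restrict hCX heC he
  refine N.closure_subset_closure ?_ (hC.mem_closure_sdiff_singleton_of_mem heC)
  exact fun f hf => ⟨hCK hf.1, (hCY hf.1).resolve_left hf.2⟩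

theorem isFlat_circuitComponent_restrict [N.Finitary] [N.Loopless] (hX : N.IsFlat X) :
    N.IsFlat (circuitComponent (N ↾ X) x) := by
  have hKX : circuitComponent (N ↾ X) x ⊆ X := circuitComponent_restrict_subset
  refine Matroid.isFlat_iff_closure_eq.2
    (Set.Subset.antisymm (fun e he => ?_) (N.subset_closure _ (hKX.trans hX.subset_ground)))
  by_contra heK
  obtain ⟨C, hCK, hC, heC⟩ := Matroid.exists_isCircuit_of_mem_closure he heK
  have hCX : C ⊆ X :=
    hCK.trans (Set.insert_subset (hX.closure ▸ N.closure_subset_closure hKX he) hKX)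
  obtain ⟨f, hfC, hfe⟩ :=
    (Matroid.loopless_iff_forall_isCircuit.1 inferInstance C hC).exists_ne e
  exact heK ((circuitConnected_restrict_isCircuit hC).subset_circuitComponent_restrict hCX hfC
    ((hCK hfC).resolve_left hfe) heC)

theorem closure_circuitComponent_closure_inter [N.Finitary] [N.Loopless] (hY : Y ⊆ N.E) :
    N.closure (circuitComponent (N ↾ N.closure Y) x ∩ Y) =
      circuitComponent (N ↾ N.closure Y) x := by
  have hK := isFlat_circuitComponent_restrict (x := x) (N.isFlat_closure Y)
  refine Set.Subset.antisymm
    ((N.closure_subset_closure Set.inter_subset_left).trans hK.closure.subset) fun e he => ?_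
  exact closure_inter_circuitComponent_subset (N.subset_closure Y)
    ⟨circuitComponent_restrict_subset he, he⟩

end Connectivity

section BasisLemmas

variable {α : Type*} {N : Matroid α} {B F G I J : Set α}

theorem contract_isBase_iff_of_isBasis (hI : N.IsBasis I F) :
    (N ／ F).IsBase J ↔ N.IsBase (J ∪ I) ∧ Disjoint F J := by
  have hcl : N.closure (J ∪ F) = N.closure (J ∪ I) :=
    (N.closure_union_congr_right hI.closure_eq_closure).symm
  rw [Matroid.isBase_iff_indep_closure_eq, Matroid.isBase_iff_indep_closure_eq,
    hI.contract_indep_iff, Matroid.contract_closure_eq, Matroid.contract_ground, hcl, and_assoc,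
    and_assoc, and_congr_right_iff, and_comm, and_congr_left_iff]
  refine fun _ _ => ⟨fun h => ?_, fun h => by rw [h]⟩
  have hF : F ⊆ N.closure (J ∪ I) := hcl ▸
    (N.subset_closure F hI.subset_ground).trans (N.closure_subset_closure Set.subset_union_right)
  rw [← Set.sdiff_union_of_subset hF, h, Set.sdiff_union_of_subset hI.subset_ground]

theorem contract_isBase_iff_exists (hF : F ⊆ N.E) :
    (N ／ F).IsBase J ↔ ∃ B, N.IsBase B ∧ N.IsBasis (B ∩ F) F ∧ B \ F = J := by
  constructor
  · intro hJ
    obtain ⟨I, hI⟩ := N.exists_isBasis F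
    obtain ⟨hJI, hFJ⟩ := (contract_isBase_iff_of_isBasis hI).1 hJ
    have hJI_inter : (J ∪ I) ∩ F = I := by
      rw [Set.union_inter_distrib_right, hFJ.symm.inter_eq, Set.empty_union,
        Set.inter_eq_left.2 hI.subset]
    have hJI_sdiff : (J ∪ I) \ F = J := by
      rw [Set.union_sdiff_distrib, hFJ.symm.sdiff_eq_left, Set.sdiff_eq_empty.2 hI.subset,
        Set.union_empty]
    exact ⟨J ∪ I, hJI, hJI_inter.symm ▸ hI, hJI_sdiff⟩
  · rintro ⟨B, hB, hBF, rfl⟩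
    refine (contract_isBase_iff_of_isBasis hBF).2 ⟨?_, Set.disjoint_sdiff_right⟩
    rwa [Set.union_comm, Set.inter_union_sdiff]

theorem contract_restrict_isBase_iff (hFG : F ⊆ G) (hG : G ⊆ N.E) (hB : N.IsBasis (B ∩ F) F) :
    ((N ↾ G) ／ F).IsBase (B ∩ (G \ F)) ↔ N.IsBasis (B ∩ G) G := by
  have hBF : (N ↾ G).IsBasis (B ∩ F) F := (Matroid.isBasis_restrict_iff hG).2 ⟨hB, hFG⟩
  rw [contract_isBase_iff_of_isBasis hBF, ← Set.inter_union_distrib_left,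
    Set.sdiff_union_of_subset hFG, Matroid.isBase_restrict_iff hG,
    and_iff_left (Set.disjoint_sdiff_right.mono_right Set.inter_subset_right)]

end BasisLemmas

/-- A finite set `S` of nonempty connected flats of `N` is nested if no antichain of at least two
members of `S` has a connected join. -/
structure IsNestedFamily {α : Type*} (N : Matroid α) (S : Set (Set α)) : Prop where
  finite : S.Finite
  isFlat : ∀ G ∈ S, N.IsFlat G
  nonempty : ∀ G ∈ S, G.Nonempty
  connected : ∀ G ∈ S, CircuitConnected (N ↾ G)
  not_connected_closure : ∀ T ⊆ S, T.Nontrivial → IsAntichain (· ⊆ ·) T →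
    ¬ CircuitConnected (N ↾ N.closure (⋃₀ T))

/-- The union of the members of `S` strictly contained in `G`. -/
def lower {α : Type*} (S : Set (Set α)) (G : Set α) : Set α :=
  ⋃₀ {H ∈ S | H ⊂ G}

theorem lower_subset {α : Type*} {S : Set (Set α)} {G : Set α} : lower S G ⊆ G :=
  Set.sUnion_subset fun _ hH => hH.2.subset

namespace IsNestedFamily

variable {α : Type*} {N : Matroid α} {S U : Set (Set α)} {B G H Y : Set α} {x : α}

theorem iUnion_sdiff_lower (hS : IsNestedFamily N S) : ⋃ G : S, G.1 \ lower S G = ⋃₀ S := by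
  refine Set.Subset.antisymm
    (Set.iUnion_subset fun G => Set.sdiff_subset.trans (Set.subset_sUnion_of_mem G.2)) ?_
  rintro x ⟨H, hH, hxH⟩
  obtain ⟨G, -, hG⟩ := (hS.finite.subset (Set.sep_subset S (x ∈ ·))).exists_le_minimal ⟨hH, hxH⟩
  refine Set.mem_iUnion.2 ⟨⟨G, hG.prop.1⟩, hG.prop.2, ?_⟩
  rintro ⟨L, ⟨hL, hLG⟩, hxL⟩
  exact hG.not_lt ⟨hL, hxL⟩ hLG

variable [N.Finitary] [N.Loopless]

theorem circuitComponent_closure_sUnion_mem (hS : IsNestedFamily N S) (hU : U ⊆ S)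
    (hx : x ∈ N.closure (⋃₀ U)) : circuitComponent (N ↾ N.closure (⋃₀ U)) x ∈ U := by
  have hUE : ⋃₀ U ⊆ N.E := Set.sUnion_subset fun H hH => (hS.isFlat H (hU hH)).subset_ground
  set K := circuitComponent (N ↾ N.closure (⋃₀ U)) x with hK
  let T : Set (Set α) := {H | Maximal (· ∈ {H ∈ U | H ⊆ K}) H}
  have hTU : T ⊆ U := fun H hH => hH.prop.1
  have hT : ⋃₀ T = K ∩ ⋃₀ U := by
    refine Set.Subset.antisymm (Set.sUnion_subset fun H hH =>
      Set.subset_inter hH.prop.2 (Set.subset_sUnion_of_mem (hTU hH))) ?_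
    rintro y ⟨hyK, H, hHU, hyH⟩
    have hHK : H ⊆ K := (hS.connected H (hU hHU)).subset_circuitComponent_restrict
      ((Set.subset_sUnion_of_mem hHU).trans (N.subset_closure _ hUE)) hyH hyK
    obtain ⟨H', hHH', hH'⟩ :=
      ((hS.finite.subset hU).subset (Set.sep_subset U (· ⊆ K))).exists_le_maximal ⟨hHU, hHK⟩
    exact ⟨H', hH', hHH' hyH⟩
  have hTK : N.closure (⋃₀ T) = K := by rw [hT, hK, closure_circuitComponent_closure_inter hUE]
  have hTs : T.Subsingleton := Set.not_nontrivial_iff.1 fun hT₂ =>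
    hS.not_connected_closure T (hTU.trans hU) hT₂ (setOfPred_maximal_antichain _)
      (hTK ▸ circuitConnected_restrict_circuitComponent_restrict)
  obtain hT₀ | ⟨H, hTH⟩ := hTs.eq_empty_or_singleton
  · have hxK : x ∈ K := mem_circuitComponent_self hx
    rw [← hTK, hT₀, Set.sUnion_empty, N.closure_empty, N.loops_eq_empty] at hxK
    exact hxK.elim
  · have hHU : H ∈ U := hTU (hTH ▸ Set.mem_singleton H)
    rwa [← hTK, hTH, Set.sUnion_singleton, (hS.isFlat H (hU hHU)).closure]

theorem isFlat_sUnion (hS : IsNestedFamily N S) (hU : U ⊆ S) : N.IsFlat (⋃₀ U) := by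
  have hUE : ⋃₀ U ⊆ N.E := Set.sUnion_subset fun H hH => (hS.isFlat H (hU hH)).subset_ground
  refine Matroid.isFlat_iff_closure_eq.2
    (Set.Subset.antisymm (fun x hx => ?_) (N.subset_closure _ hUE))
  exact ⟨_, hS.circuitComponent_closure_sUnion_mem hU hx, mem_circuitComponent_self hx⟩

theorem exists_superset_of_circuitConnected (hS : IsNestedFamily N S) (hU : U ⊆ S)
    (hY : CircuitConnected (N ↾ Y)) (hYU : Y ⊆ ⋃₀ U) (hne : Y.Nonempty) : ∃ H ∈ U, Y ⊆ H := by
  obtain ⟨y, hy⟩ := hne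
  have hcl := (hS.isFlat_sUnion hU).closure
  have hyU : y ∈ N.closure (⋃₀ U) := hcl.symm ▸ hYU hy
  exact ⟨_, hS.circuitComponent_closure_sUnion_mem hU hyU,
    hY.subset_circuitComponent_restrict (hcl.symm ▸ hYU) hy (mem_circuitComponent_self hyU)⟩

theorem subset_or_subset_of_mem (hS : IsNestedFamily N S) (hG : G ∈ S) (hH : H ∈ S)
    (hxG : x ∈ G) (hxH : x ∈ H) : G ⊆ H ∨ H ⊆ G := by
  have hGH : {G, H} ⊆ S := Set.pair_subset hG hH
  have hsub : ∀ L ∈ ({G, H} : Set (Set α)), L ⊆ N.closure (⋃₀ {G, H}) := fun L hL =>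
    (hS.isFlat_sUnion hGH).closure.symm ▸ Set.subset_sUnion_of_mem hL
  have hx : x ∈ N.closure (⋃₀ {G, H}) := hsub G (.inl rfl) hxG
  have hle : ∀ L ∈ ({G, H} : Set (Set α)), x ∈ L →
      L ⊆ circuitComponent (N ↾ N.closure (⋃₀ {G, H})) x := fun L hL hxL =>
    (hS.connected L (hGH hL)).subset_circuitComponent_restrict (hsub L hL) hxL
      (mem_circuitComponent_self hx)
  obtain h | h := hS.circuitComponent_closure_sUnion_mem hGH hx
  · exact .inr (h ▸ hle H (.inr rfl) hxH)
  · exact .inl (Set.mem_singleton_iff.1 h ▸ hle G (.inl rfl) hxG)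

theorem isFlat_lower (hS : IsNestedFamily N S) : N.IsFlat (lower S G) :=
  hS.isFlat_sUnion (Set.sep_subset _ _)

theorem lower_ssubset (hS : IsNestedFamily N S) (hG : G ∈ S) : lower S G ⊂ G := by
  refine lower_subset.ssubset_of_ne fun h => ?_
  obtain ⟨H, hH, hGH⟩ := hS.exists_superset_of_circuitConnected (Set.sep_subset S (· ⊂ G))
    (hS.connected G hG) h.symm.subset (hS.nonempty G hG)
  exact hH.2.not_subset hGH

theorem disjoint_sdiff_lower (hS : IsNestedFamily N S) (hG : G ∈ S) (hH : H ∈ S) (hGH : G ≠ H) :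
    Disjoint (G \ lower S G) (H \ lower S H) := by
  refine Set.disjoint_left.2 fun x hxG hxH => ?_
  obtain h | h := hS.subset_or_subset_of_mem hG hH hxG.1 hxH.1
  · exact hxH.2 ⟨G, ⟨hG, h.ssubset_of_ne hGH⟩, hxG.1⟩
  · exact hxG.2 ⟨H, ⟨hH, h.ssubset_of_ne hGH.symm⟩, hxH.1⟩

theorem isBasis_inter_sUnion (hS : IsNestedFamily N S) (hU : U ⊆ S)
    (hB : ∀ H ∈ U, N.IsBasis (B ∩ H) H) : N.IsBasis (B ∩ ⋃₀ U) (⋃₀ U) := by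
  have hUE := (hS.isFlat_sUnion hU).subset_ground
  refine Matroid.isBasis_iff_indep_subset_closure.2 ⟨?_, Set.inter_subset_right, ?_⟩
  · by_contra hdep
    obtain ⟨C, hCB, hC⟩ := (Matroid.not_indep_iff (Set.inter_subset_right.trans hUE)).1 hdep
      |>.exists_isCircuit_subset
    obtain ⟨H, hH, hCH⟩ := hS.exists_superset_of_circuitConnected hU
      (circuitConnected_restrict_isCircuit hC) (hCB.trans Set.inter_subset_right) hC.nonempty
    exact hC.not_indep ((hB H hH).indep.subset
      (Set.subset_inter (hCB.trans Set.inter_subset_left) hCH))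
  · exact Set.sUnion_subset fun H hH => (hB H hH).subset_closure.trans
      (N.closure_subset_closure (Set.inter_subset_inter_right B (Set.subset_sUnion_of_mem hH)))

theorem forall_isBasis_inter_iff (hS : IsNestedFamily N S) :
    (∀ G ∈ S, N.IsBasis (B ∩ G) G) ↔
      ∀ G ∈ S, ((N ↾ G) ／ lower S G).IsBase (B ∩ (G \ lower S G)) := by
  have isBase_iff : ∀ G ∈ S, (∀ H ∈ S, H ⊂ G → N.IsBasis (B ∩ H) H) →
      (((N ↾ G) ／ lower S G).IsBase (B ∩ (G \ lower S G)) ↔ N.IsBasis (B ∩ G) G) :=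
    fun G hG hB => contract_restrict_isBase_iff lower_subset (hS.isFlat G hG).subset_ground
      (hS.isBasis_inter_sUnion (Set.sep_subset _ _) fun H hH => hB H hH.1 hH.2)
  refine ⟨fun h G hG => (isBase_iff G hG fun H hH _ => h H hH).2 (h G hG), fun h G hG => ?_⟩
  refine (hS.finite.wellFoundedOn (r := (· < ·))).induction
    (P := fun G => N.IsBasis (B ∩ G) G) hG fun G hG ih => ?_
  exact (isBase_iff G hG ih).1 (h G hG)

theorem pairwise_disjoint_ground (hS : IsNestedFamily N S) :
    Pairwise (Function.onFun Disjoint fun G : S => ((N ↾ G.1) ／ lower S G.1).E) :=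
  fun G H hGH => hS.disjoint_sdiff_lower G.2 H.2 (Subtype.coe_injective.ne hGH)

/-- The direct sum, over the members `G` of a nested family, of `N` restricted to `G` and contracted
by the union of the smaller members: the initial matroid of `N` at a point in the relative interior
of the cone spanned by the family. -/
noncomputable def gradedSum (hS : IsNestedFamily N S) : Matroid α :=
  Matroid.disjointSigma (fun G : S => (N ↾ G.1) ／ lower S G.1) hS.pairwise_disjoint_ground

theorem gradedSum_ground (hS : IsNestedFamily N S) : hS.gradedSum.E = ⋃₀ S := by
  rw [gradedSum, Matroid.disjointSigma_ground_eq, ← hS.iUnion_sdiff_lower]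
  rfl

theorem gradedSum_isBase_iff (hS : IsNestedFamily N S) :
    hS.gradedSum.IsBase B ↔ (∀ G ∈ S, N.IsBasis (B ∩ G) G) ∧ B ⊆ ⋃₀ S := by
  rw [hS.forall_isBasis_inter_iff, gradedSum, Matroid.disjointSigma_isBase_iff,
    ← hS.iUnion_sdiff_lower, SetCoe.forall]
  rfl

end IsNestedFamily

section DirectSum

theorem card_quot_eq_card_iff {α ι : Type*} [Finite α] {rel : α → α → Prop} (hrel : Equivalence rel)
    {f : α → ι} (hf : f.Surjective) (hle : ∀ x y, rel x y → f x = f y) :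
    Nat.card (Quot rel) = Nat.card ι ↔ ∀ x y, f x = f y → rel x y := by
  have hsurj : (Quot.lift f hle).Surjective := fun i => (hf i).imp' (Quot.mk rel) fun _ h => h
  have hinj : (Quot.lift f hle).Injective ↔ ∀ x y, f x = f y → rel x y := by
    refine ⟨fun hinj x y hxy => (hrel.quot_mk_eq_iff x y).1 (hinj hxy), fun hinj => ?_⟩
    rintro ⟨x⟩ ⟨y⟩ hxy
    exact (hrel.quot_mk_eq_iff x y).2 (hinj x y hxy)
  rw [← hinj]
  refine ⟨fun h => (hsurj.bijective_of_nat_card_le h.le).injective, fun h => ?_⟩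
  exact Nat.card_eq_of_bijective _ ⟨h, hsurj⟩

variable {α ι : Type*} {M : ι → Matroid α} {C : Set α} {x y : α} {i j : ι}
  {h : Pairwise (Function.onFun Disjoint fun i => (M i).E)}

theorem indep_disjointSigma_iff_of_subset (hC : C ⊆ (M i).E) :
    (Matroid.disjointSigma M h).Indep C ↔ (M i).Indep C := by
  rw [Matroid.disjointSigma_indep_iff, and_iff_left (Set.subset_iUnion_of_subset i hC)]
  refine ⟨fun hind => Set.inter_eq_left.2 hC ▸ hind i, fun hind j => ?_⟩
  obtain rfl | hij := eq_or_ne i j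
  · rwa [Set.inter_eq_left.2 hC]
  · rw [((h hij).mono_left hC).inter_eq]
    exact (M j).empty_indep

theorem isCircuit_disjointSigma_iff_of_subset (hC : C ⊆ (M i).E) :
    (Matroid.disjointSigma M h).IsCircuit C ↔ (M i).IsCircuit C := by
  have hCE : C ⊆ (Matroid.disjointSigma M h).E :=
    Matroid.disjointSigma_ground_eq (M := M) ▸ Set.subset_iUnion_of_subset i hC
  rw [Matroid.isCircuit_iff_forall_ssubset, Matroid.isCircuit_iff_forall_ssubset,
    ← Matroid.not_indep_iff hCE, ← Matroid.not_indep_iff hC, indep_disjointSigma_iff_of_subset hC]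
  refine and_congr_right fun _ => forall₂_congr fun I hI => ?_
  exact indep_disjointSigma_iff_of_subset (hI.subset.trans hC)

theorem exists_subset_ground_of_isCircuit_disjointSigma
    (hC : (Matroid.disjointSigma M h).IsCircuit C) : ∃ i, C ⊆ (M i).E := by
  have hCE : C ⊆ ⋃ i, (M i).E := Matroid.disjointSigma_ground_eq (M := M) ▸ hC.subset_ground
  have hdep : ∃ i, ¬ (M i).Indep (C ∩ (M i).E) := by
    have := hC.not_indep
    rwa [Matroid.disjointSigma_indep_iff, and_iff_left hCE, not_forall] at this
  obtain ⟨i, hi⟩ := hdep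
  rw [← indep_disjointSigma_iff_of_subset (h := h) Set.inter_subset_right] at hi
  refine ⟨i, Set.inter_eq_left.1 (by_contra fun hne => hi ?_)⟩
  exact hC.ssubset_indep (Set.inter_subset_left.ssubset_of_ne hne)

theorem circuitRel_disjointSigma_iff (hx : x ∈ (M i).E) (hy : y ∈ (M j).E) :
    CircuitRel (Matroid.disjointSigma M h) x y ↔ i = j ∧ CircuitRel (M i) x y := by
  have eq_of_mem : ∀ {z k l}, z ∈ (M k).E → z ∈ (M l).E → k = l := fun hk hl =>
    by_contra fun hkl => Set.disjoint_left.1 (h hkl) hk hl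
  constructor
  · rintro (rfl | ⟨C, hC, hxC, hyC⟩)
    · exact ⟨eq_of_mem hx hy, .inl rfl⟩
    · obtain ⟨k, hk⟩ := exists_subset_ground_of_isCircuit_disjointSigma hC
      obtain rfl := eq_of_mem hx (hk hxC)
      obtain rfl := eq_of_mem hy (hk hyC)
      exact ⟨rfl, .inr ⟨C, (isCircuit_disjointSigma_iff_of_subset hk).1 hC, hxC, hyC⟩⟩
  · rintro ⟨rfl, rfl | ⟨C, hC, hxyC⟩⟩
    · exact .inl rfl
    · exact .inr ⟨C, (isCircuit_disjointSigma_iff_of_subset hC.subset_ground).2 hC, hxyC⟩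

theorem card_quot_circuitRel_disjointSigma [Finite α] (hne : ∀ i, (M i).E.Nonempty)
    (huniv : ⋃ i, (M i).E = Set.univ) :
    Nat.card (Quot (CircuitRel (Matroid.disjointSigma M h))) = Nat.card ι ↔
      ∀ i, CircuitConnected (M i) := by
  choose f hf using fun x => Set.mem_iUnion.1 (huniv ▸ Set.mem_univ x)
  have f_eq : ∀ {x i}, x ∈ (M i).E → f x = i := fun hx =>
    by_contra fun hne => Set.disjoint_left.1 (h hne) (hf _) hx
  rw [card_quot_eq_card_iff (circuitRel_equivalence _) (fun i => (hne i).imp fun x => f_eq)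
    fun x y hxy => ((circuitRel_disjointSigma_iff (hf x) (hf y)).1 hxy).1]
  constructor
  · intro hrel i x hx y hy
    exact ((circuitRel_disjointSigma_iff hx hy).1 (hrel x y ((f_eq hx).trans (f_eq hy).symm))).2
  · intro hconn x y hxy
    exact (circuitRel_disjointSigma_iff (hf x) (hf y)).2
      ⟨hxy, hconn _ x (hf x) y (hxy ▸ hf y)⟩

end DirectSum

theorem IsNestedFamily.card_quot_circuitRel_gradedSum {α : Type*} [Finite α] {N : Matroid α}
    [N.Loopless] {S : Set (Set α)} (hS : IsNestedFamily N S) (huniv : ⋃₀ S = Set.univ) :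
    Nat.card (Quot (CircuitRel hS.gradedSum)) = S.ncard ↔
      ∀ G ∈ S, CircuitConnected ((N ↾ G) ／ lower S G) := by
  rw [← Nat.card_coe_set_eq, gradedSum, card_quot_circuitRel_disjointSigma, SetCoe.forall]
  · exact fun G => Set.nonempty_of_ssubset (hS.lower_ssubset G.2)
  · exact hS.iUnion_sdiff_lower.trans huniv

section SeparatingFamily

variable {α : Type*} {N : Matroid α} {F G : Set α}

theorem not_mem_of_isAntichain_of_nontrivial {β : Type*} [PartialOrder β] {T : Set β} {a : β}
    (hT : IsAntichain (· ≤ ·) T) (hT₂ : T.Nontrivial) (ha : ∀ b ∈ T, b ≤ a ∨ a ≤ b) : a ∉ T := by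
  intro haT
  obtain ⟨b, hb, hba⟩ := hT₂.exists_ne a
  obtain h | h := ha b hb
  exacts [hba (hT.eq hb haT h), hba (hT.eq haT hb h).symm]

/-- The components of `F` together with `G` and the whole ground set. Its minimal members are the
components of `F`, so that the union of the members strictly below `G` is `F`. -/
def componentFamily (N : Matroid α) (F G : Set α) : Set (Set α) :=
  insert N.E (insert G (circuitComponent (N ↾ F) '' F))

theorem lower_componentFamily [N.Finitary] (hFG : F ⊂ G) (hGE : G ⊆ N.E) :
    lower (componentFamily N F G) G = F := by
  refine Set.Subset.antisymm (Set.sUnion_subset ?_) fun x hx => ?_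
  · rintro H ⟨rfl | rfl | ⟨x, -, rfl⟩, hHG⟩
    · exact absurd hGE hHG.not_subset
    · exact absurd rfl hHG.ne
    · exact circuitComponent_restrict_subset
  · have hKF : circuitComponent (N ↾ F) x ⊆ F := circuitComponent_restrict_subset
    exact ⟨_, ⟨.inr (.inr ⟨x, hx, rfl⟩), hKF.trans_ssubset hFG⟩, mem_circuitComponent_self hx⟩

theorem isNestedFamily_componentFamily [Finite α] [N.Loopless] (hN : CircuitConnected N)
    (hF : N.IsFlat F) (hG : N.IsFlat G) (hFG : F ⊂ G) (hGc : CircuitConnected (N ↾ G)) :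
    IsNestedFamily N (componentFamily N F G) where
  finite := Set.toFinite _
  isFlat := by
    rintro H (rfl | rfl | ⟨x, -, rfl⟩)
    exacts [N.ground_isFlat, hG, isFlat_circuitComponent_restrict hF]
  nonempty := by
    rintro H (rfl | rfl | ⟨x, hx, rfl⟩)
    exacts [(Set.nonempty_of_ssubset' hFG).mono hG.subset_ground, Set.nonempty_of_ssubset' hFG,
      ⟨x, mem_circuitComponent_self hx⟩]
  connected := by
    rintro H (rfl | rfl | ⟨x, -, rfl⟩)
    exacts [N.restrict_ground_eq_self.symm ▸ hN, hGc,
      circuitConnected_restrict_circuitComponent_restrict]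
  not_connected_closure := by
    intro T hTS hT₂ hT hconn
    have hKF : ∀ x, circuitComponent (N ↾ F) x ⊆ F := fun x => circuitComponent_restrict_subset
    have hET : N.E ∉ T := not_mem_of_isAntichain_of_nontrivial hT hT₂ fun H hH => .inl <| by
      obtain rfl | rfl | ⟨x, -, rfl⟩ := hTS hH
      exacts [subset_rfl, hG.subset_ground, (hKF x).trans hF.subset_ground]
    have hGT : G ∉ T := not_mem_of_isAntichain_of_nontrivial hT hT₂ fun H hH => by
      obtain rfl | rfl | ⟨x, -, rfl⟩ := hTS hH
      exacts [.inr hG.subset_ground, .inl subset_rfl, .inl ((hKF x).trans hFG.subset)]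
    have hTK : T ⊆ circuitComponent (N ↾ F) '' F := fun H hH =>
      ((hTS hH).resolve_left (ne_of_mem_of_not_mem hH hET)).resolve_left
        (ne_of_mem_of_not_mem hH hGT)
    have hTF : ⋃₀ T ⊆ F := Set.sUnion_subset fun H hH => by
      obtain ⟨x, -, rfl⟩ := hTK hH
      exact hKF x
    have hcl : N.closure (⋃₀ T) ⊆ F := hF.closure ▸ N.closure_subset_closure hTF
    have hTcl : ∀ H ∈ T, H ⊆ N.closure (⋃₀ T) := fun H hH =>
      (Set.subset_sUnion_of_mem hH).trans (N.subset_closure _ (hTF.trans hF.subset_ground))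
    obtain ⟨A, hA, B, hB, hAB⟩ := hT₂
    obtain ⟨x, hx, rfl⟩ := hTK hA
    have hxK : x ∈ circuitComponent (N ↾ F) x := mem_circuitComponent_self hx
    have hclK : N.closure (⋃₀ T) ⊆ circuitComponent (N ↾ F) x :=
      hconn.subset_circuitComponent_restrict hcl (hTcl _ hA hxK) hxK
    exact hAB (hT.eq hB hA ((hTcl B hB).trans hclK)).symm

theorem forall_contract_circuitConnected_iff [Finite α] [N.Loopless] (hN : CircuitConnected N) :
    (∀ F G, N.IsFlat F → N.IsFlat G → F ⊂ G → CircuitConnected (N ↾ G) →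
        CircuitConnected ((N ↾ G) ／ F)) ↔
      ∀ S, IsNestedFamily N S → N.E ∈ S → ∀ G ∈ S, CircuitConnected ((N ↾ G) ／ lower S G) := by
  constructor
  · intro h S hS _ G hG
    exact h _ G hS.isFlat_lower (hS.isFlat G hG) (hS.lower_ssubset hG) (hS.connected G hG)
  · intro h F G hF hG hFG hGc
    rw [← lower_componentFamily hFG hG.subset_ground]
    exact h _ (isNestedFamily_componentFamily hN hF hG hFG hGc) (.inl rfl) G (.inr (.inl rfl))

end SeparatingFamily

/-- `𝔅` is the collection of bases of the matroid `N`. -/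
def Presents {n : ℕ} (𝔅 : Finset (Finset (Fin n))) (N : Matroid (Fin n)) : Prop :=
  ∀ B : Finset (Fin n), B ∈ 𝔅 ↔ N.IsBase B

namespace Presents

variable {n : ℕ} {𝔅 : Finset (Finset (Fin n))} {N : Matroid (Fin n)} {C E F I : Finset (Fin n)}

theorem famIndep_iff (h : Presents 𝔅 N) : FamIndep 𝔅 I ↔ N.Indep I := by
  rw [Matroid.indep_iff]
  constructor
  · rintro ⟨B, hB, hIB⟩
    exact ⟨B, (h B).1 hB, Finset.coe_subset.2 hIB⟩
  · rintro ⟨B, hB, hIB⟩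
    lift B to Finset (Fin n) using Set.toFinite B
    exact ⟨B, (h B).2 hB, Finset.coe_subset.1 hIB⟩

theorem famCircuit_iff (h : Presents 𝔅 N) (hC : (C : Set (Fin n)) ⊆ N.E) :
    FamCircuit 𝔅 C ↔ N.IsCircuit C := by
  rw [Matroid.isCircuit_iff_forall_ssubset, ← Matroid.not_indep_iff hC, FamCircuit, h.famIndep_iff]
  refine and_congr_right fun _ => ⟨fun hD I hI => ?_, fun hI D hD => ?_⟩
  · lift I to Finset (Fin n) using Set.toFinite I
    exact h.famIndep_iff.1 (hD I (Finset.coe_ssubset.1 hI))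
  · exact h.famIndep_iff.2 (hI (Finset.coe_ssubset.2 hD))

theorem exists_famCircuit_iff (h : Presents 𝔅 N) (hE : (E : Set (Fin n)) = N.E)
    {P : Set (Fin n) → Prop} :
    (∃ C ⊆ E, FamCircuit 𝔅 C ∧ P C) ↔ ∃ C, N.IsCircuit C ∧ P C := by
  constructor
  · rintro ⟨C, hCE, hC, hP⟩
    exact ⟨C, (h.famCircuit_iff (hE ▸ Finset.coe_subset.2 hCE)).1 hC, hP⟩
  · rintro ⟨C, hC, hP⟩
    lift C to Finset (Fin n) using Set.toFinite C
    exact ⟨C, Finset.coe_subset.1 (hE ▸ hC.subset_ground), (h.famCircuit_iff hC.subset_ground).2 hC,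
      hP⟩

theorem famConnectedOn_iff (h : Presents 𝔅 N) (hE : (E : Set (Fin n)) = N.E) :
    FamConnectedOn 𝔅 E ↔ CircuitConnected N := by
  simp only [FamConnectedOn, CircuitConnected, CircuitRel, ← hE, Finset.mem_coe,
    or_iff_not_imp_left, ← h.exists_famCircuit_iff hE]

theorem famConnRel_eq (h : Presents 𝔅 N) (hE : N.E = Set.univ) :
    FamConnRel 𝔅 = CircuitRel N := by
  funext i j
  have := h.exists_famCircuit_iff (E := Finset.univ) (by rw [hE, Finset.coe_univ])
    (P := fun C => i ∈ C ∧ j ∈ C)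
  simp only [Finset.subset_univ, true_and, Finset.mem_coe] at this
  rw [FamConnRel, CircuitRel, this]

theorem famRk_eq (h : Presents 𝔅 N) : (famRk 𝔅 F : ℕ∞) = N.eRk F := by
  classical
  refine le_antisymm ?_ ?_
  · obtain ⟨I, hI, hIF⟩ := Finset.exists_mem_eq_sup (F.powerset.filter (FamIndep 𝔅 ·))
      ⟨∅, by simp [h.famIndep_iff]⟩ Finset.card
    simp only [Finset.mem_filter, Finset.mem_powerset] at hI
    rw [famRk, hIF, ← Set.encard_coe_eq_coe_finsetCard]
    exact (h.famIndep_iff.1 hI.2).encard_le_eRk_of_subset (Finset.coe_subset.2 hI.1)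
  · obtain ⟨I, hI⟩ := N.exists_isBasis' F
    lift I to Finset (Fin n) using Set.toFinite I
    rw [← hI.encard_eq_eRk, Set.encard_coe_eq_coe_finsetCard, Nat.cast_le, famRk]
    exact Finset.le_sup (f := Finset.card) (Finset.mem_filter.2
      ⟨Finset.mem_powerset.2 (Finset.coe_subset.1 hI.subset), h.famIndep_iff.2 hI.indep⟩)

theorem restrict (h : Presents 𝔅 N) : Presents (famRestrictBases 𝔅 F) (N ↾ F) := by
  intro B
  simp only [famRestrictBases, Finset.mem_filter, Finset.mem_powerset, h.famIndep_iff]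
  rw [Matroid.isBase_restrict_iff', Matroid.IsBasis', maximal_subset_iff, Finset.coe_subset]
  constructor
  · rintro ⟨hBF, hB, hmax⟩
    refine ⟨⟨hB, hBF⟩, fun I hI hBI => ?_⟩
    lift I to Finset (Fin n) using Set.toFinite I
    exact congrArg _ (hmax I (Finset.coe_subset.1 hI.2) hI.1 (Finset.coe_subset.1 hBI))
  · rintro ⟨⟨hB, hBF⟩, hmax⟩
    exact ⟨hBF, hB, fun I hIF hI hBI =>
      Finset.coe_injective (hmax ⟨hI, Finset.coe_subset.2 hIF⟩ (Finset.coe_subset.2 hBI))⟩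

theorem card_inter_eq_famRk_iff (h : Presents 𝔅 N) (hF : (F : Set (Fin n)) ⊆ N.E)
    {B : Finset (Fin n)} (hB : N.IsBase B) :
    (B ∩ F).card = famRk 𝔅 F ↔ N.IsBasis (B ∩ F : Set (Fin n)) F := by
  rw [Matroid.isBasis_iff_indep_encard_eq_of_finite (Set.toFinite _), ← h.famRk_eq,
    ← Finset.coe_inter, Set.encard_coe_eq_coe_finsetCard, Nat.cast_inj, Finset.coe_inter,
    and_iff_right Set.inter_subset_right, and_iff_right (hB.indep.subset Set.inter_subset_left)]

theorem contract (h : Presents 𝔅 N) (hF : (F : Set (Fin n)) ⊆ N.E) :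
    Presents (famContractBases 𝔅 F) (N ／ F) := by
  intro J
  simp only [famContractBases, Finset.mem_image, Finset.mem_filter]
  rw [contract_isBase_iff_exists hF]
  constructor
  · rintro ⟨B, ⟨hB, hBF⟩, rfl⟩
    have hB' := (h B).1 hB
    exact ⟨B, hB', (h.card_inter_eq_famRk_iff hF hB').1 hBF, (Finset.coe_sdiff B F).symm⟩
  · rintro ⟨B, hB, hBF, hJ⟩
    lift B to Finset (Fin n) using Set.toFinite B
    exact ⟨B, ⟨(h B).2 hB, (h.card_inter_eq_famRk_iff hF hB).2 hBF⟩, by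
      rwa [← Finset.coe_inj, Finset.coe_sdiff]⟩

end Presents

theorem isAntichain_coe_image_iff {α : Type*} {T : Finset (Finset α)} :
    IsAntichain (· ⊆ ·) ((↑) '' (T : Set (Finset α)) : Set (Set α)) ↔
      ∀ A ∈ T, ∀ B ∈ T, A ≠ B → ¬ A ⊆ B ∧ ¬ B ⊆ A := by
  rw [IsAntichain, Finset.coe_injective.injOn.pairwise_image]
  constructor
  · exact fun h A hA B hB hAB => ⟨fun hs => h hA hB hAB (Finset.coe_subset.2 hs),
      fun hs => h hB hA hAB.symm (Finset.coe_subset.2 hs)⟩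
  · exact fun h A hA B hB hAB hs => (h A hA B hB hAB).1 (Finset.coe_subset.1 hs)

theorem sUnion_coe_image_eq_univ {α : Type*} [Fintype α] {S : Finset (Finset α)}
    (hu : Finset.univ ∈ S) : ⋃₀ ((↑) '' (S : Set (Finset α))) = (Set.univ : Set α) :=
  Set.eq_univ_of_univ_subset (Finset.coe_univ (α := α) ▸
    Set.subset_sUnion_of_mem (Set.mem_image_of_mem _ (Finset.mem_coe.2 hu)))

namespace FinMatroid

variable {n r : ℕ} {M : FinMatroid n r} {S : Finset (Finset (Fin n))} {B F G X : Finset (Fin n)}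
  {c : Finset (Fin n) → ℝ}

/-- The matroid on `Fin n` with ground set `Set.univ` and the same bases as `M`. -/
def toMatroid (M : FinMatroid n r) : Matroid (Fin n) :=
  Matroid.ofIsBaseOfFinite (E := Set.univ) (Set.toFinite _)
    (fun B => ∃ B' ∈ M.bases, (B' : Set (Fin n)) = B)
    (by obtain ⟨B, hB⟩ := M.bases_nonempty; exact ⟨B, B, hB, rfl⟩)
    (by
      rintro _ _ ⟨B₁, hB₁, rfl⟩ ⟨B₂, hB₂, rfl⟩ i hi
      obtain ⟨j, hj, hB⟩ := M.exchange B₁ hB₁ B₂ hB₂ i (by simpa using hi)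
      exact ⟨j, by simpa using hj, _, hB, by simp⟩)
    (fun _ _ => Set.subset_univ _)

theorem presents_toMatroid (M : FinMatroid n r) : Presents M.bases M.toMatroid := fun B =>
  ⟨fun hB => ⟨B, hB, rfl⟩, fun ⟨_, hB', h⟩ => Finset.coe_injective h ▸ hB'⟩

theorem isFlat_iff : M.IsFlat F ↔ M.toMatroid.IsFlat F := by
  have hcircuit : ∀ C : Finset (Fin n), M.IsCircuit C ↔ M.toMatroid.IsCircuit C := fun C =>
    M.presents_toMatroid.famCircuit_iff (Set.subset_univ _)
  have hFE : (F : Set (Fin n)) ⊆ M.toMatroid.E := Set.subset_univ _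
  rw [Matroid.isFlat_iff_closure_eq]
  constructor
  · refine fun hF => Set.Subset.antisymm (fun e he => ?_) (M.toMatroid.subset_closure F hFE)
    by_contra heF
    obtain ⟨C, hCF, hC, heC⟩ := Matroid.exists_isCircuit_of_mem_closure he heF
    lift C to Finset (Fin n) using Set.toFinite C
    refine hF C ((hcircuit C).2 hC) (Finset.card_eq_one.2 ⟨e, ?_⟩)
    ext x
    rw [Finset.mem_sdiff, Finset.mem_singleton]
    exact ⟨fun hx => (hCF hx.1).resolve_right hx.2, fun hx => hx ▸ ⟨heC, heF⟩⟩
  · intro hF C hC hcard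
    obtain ⟨e, he⟩ := Finset.card_eq_one.1 hcard
    obtain ⟨heC, heF⟩ := Finset.mem_sdiff.1 (he ▸ Finset.mem_singleton_self e)
    have hCF : (C : Set (Fin n)) \ {e} ⊆ F := fun x hx => by
      by_contra hxF
      exact hx.2 (Finset.mem_singleton.1 (he ▸ Finset.mem_sdiff.2 ⟨hx.1, hxF⟩))
    refine heF (hF.subset (M.toMatroid.closure_subset_closure hCF ?_))
    exact ((hcircuit C).1 hC).mem_closure_sdiff_singleton_of_mem heC

theorem coe_closure : (M.closure X : Set (Fin n)) = M.toMatroid.closure X := by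
  ext i
  simp only [closure, Finset.coe_filter, Finset.mem_univ, true_and, Set.mem_ofPred_eq,
    M.toMatroid.mem_closure_iff_forall_mem_isFlat (X := (X : Set (Fin n))) (Set.subset_univ _),
    isFlat_iff]
  refine ⟨fun h F hF hXF => ?_, fun h F hF hXF => h F hF (Finset.coe_subset.2 hXF)⟩
  lift F to Finset (Fin n) using Set.toFinite F
  exact h F hF (Finset.coe_subset.1 hXF)

theorem Connected.circuitConnected (hM : M.Connected) : CircuitConnected M.toMatroid := by
  rw [← M.presents_toMatroid.famConnectedOn_iff (E := Finset.univ) Finset.coe_univ]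
  intro i _ j _ hij
  obtain ⟨C, hC⟩ := hM i j hij
  exact ⟨C, Finset.subset_univ C, hC⟩

theorem famConnectedOn_restrictBases_iff :
    FamConnectedOn (M.restrictBases F) F ↔ CircuitConnected (M.toMatroid ↾ F) :=
  M.presents_toMatroid.restrict.famConnectedOn_iff rfl

theorem famConnectedOn_contractBases_iff (hFG : F ⊆ G) :
    FamConnectedOn (famContractBases (M.restrictBases G) F) (G \ F) ↔
      CircuitConnected ((M.toMatroid ↾ G) ／ (F : Set (Fin n))) :=
  (M.presents_toMatroid.restrict.contract (Finset.coe_subset.2 hFG)).famConnectedOn_iff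
    (Finset.coe_sdiff G F)

theorem forall_famConnectedOn_contractBases_iff :
    (∀ F G : Finset (Fin n), M.IsFlat F → M.IsFlat G → F ⊂ G →
      FamConnectedOn (M.restrictBases G) G →
      FamConnectedOn (famContractBases (M.restrictBases G) F) (G \ F)) ↔
      ∀ F G, M.toMatroid.IsFlat F → M.toMatroid.IsFlat G → F ⊂ G →
        CircuitConnected (M.toMatroid ↾ G) → CircuitConnected ((M.toMatroid ↾ G) ／ F) := by
  constructor
  · intro h F G hF hG hFG hGc
    lift F to Finset (Fin n) using Set.toFinite F
    lift G to Finset (Fin n) using Set.toFinite G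
    rw [Finset.coe_ssubset] at hFG
    exact (famConnectedOn_contractBases_iff hFG.subset).1 (h F G (isFlat_iff.2 hF) (isFlat_iff.2 hG)
      hFG (famConnectedOn_restrictBases_iff.2 hGc))
  · intro h F G hF hG hFG hGc
    exact (famConnectedOn_contractBases_iff hFG.subset).2 (h F G (isFlat_iff.1 hF)
      (isFlat_iff.1 hG) (Finset.coe_ssubset.2 hFG) (famConnectedOn_restrictBases_iff.1 hGc))

/-- The minimal building set of the lattice of flats of `M`: its nonempty connected flats. -/
def connectedFlats (M : FinMatroid n r) : Set (Finset (Fin n)) :=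
  {G | M.IsFlat G ∧ G ≠ ∅ ∧ FamConnectedOn (M.restrictBases G) G}

theorem mem_connectedFlats_iff :
    G ∈ M.connectedFlats ↔ M.toMatroid.IsFlat G ∧ (G : Set (Fin n)).Nonempty ∧
      CircuitConnected (M.toMatroid ↾ G) := by
  rw [connectedFlats, Set.mem_ofPred_eq, isFlat_iff, famConnectedOn_restrictBases_iff,
    Finset.coe_nonempty, Finset.nonempty_iff_ne_empty]

theorem closure_sup_mem_connectedFlats_iff {T : Finset (Finset (Fin n))} (hG : G ∈ T)
    (hne : G.Nonempty) :
    M.closure (T.sup id) ∈ M.connectedFlats ↔ CircuitConnected (M.toMatroid ↾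
      M.toMatroid.closure (⋃₀ ((↑) '' (T : Set (Finset (Fin n)))))) := by
  have hsup : ((T.sup id : Finset (Fin n)) : Set (Fin n)) =
      ⋃₀ ((↑) '' (T : Set (Finset (Fin n)))) := by
    ext x
    simp [Finset.mem_sup]
  have hcl : (M.toMatroid.closure (T.sup id : Finset (Fin n))).Nonempty :=
    (Finset.coe_nonempty.2 (hne.mono (Finset.le_sup (f := id) hG))).mono
      (M.toMatroid.subset_closure _ (Set.subset_univ _))
  rw [mem_connectedFlats_iff, coe_closure, and_iff_right (M.toMatroid.isFlat_closure _),
    and_iff_right hcl, hsup]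

theorem isNested_connectedFlats_iff :
    M.IsNested M.connectedFlats S ↔
      IsNestedFamily M.toMatroid ((↑) '' (S : Set (Finset (Fin n)))) := by
  have hflats : (S : Set (Finset (Fin n))) ⊆ M.connectedFlats ↔ ∀ G ∈ S, M.toMatroid.IsFlat G ∧
      (G : Set (Fin n)).Nonempty ∧ CircuitConnected (M.toMatroid ↾ G) :=
    forall₂_congr fun _ _ => mem_connectedFlats_iff
  have hjoin : (∀ G ∈ S, (G : Set (Fin n)).Nonempty) → ∀ T ⊆ S, 2 ≤ T.card →
      (M.closure (T.sup id) ∈ M.connectedFlats ↔ CircuitConnected (M.toMatroid ↾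
        M.toMatroid.closure (⋃₀ ((↑) '' (T : Set (Finset (Fin n))))))) := by
    intro hne T hTS hT
    obtain ⟨G, hG⟩ := Finset.card_pos.1 (two_pos.trans_le hT)
    exact closure_sup_mem_connectedFlats_iff hG (Finset.coe_nonempty.1 (hne G (hTS hG)))
  constructor
  · rintro ⟨hS, hnest⟩
    rw [hflats] at hS
    refine ⟨Set.toFinite _, Set.forall_mem_image.2 fun G hG => (hS G hG).1,
      Set.forall_mem_image.2 fun G hG => (hS G hG).2.1,
      Set.forall_mem_image.2 fun G hG => (hS G hG).2.2, fun T hTS hT hTanti => ?_⟩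
    obtain ⟨T, hTS', rfl⟩ := Set.subset_image_iff.1 hTS
    lift T to Finset (Finset (Fin n)) using Set.toFinite T
    rw [Finset.coe_subset] at hTS'
    have hT₂ : 2 ≤ T.card := Finset.one_lt_card_iff_nontrivial.2 (Set.nontrivial_of_image _ _ hT)
    rw [← hjoin (fun G hG => (hS G hG).2.1) T hTS' hT₂]
    exact hnest T hTS' hT₂ (isAntichain_coe_image_iff.1 hTanti)
  · intro hS
    have hmem : ∀ G ∈ S, (G : Set (Fin n)) ∈ (↑) '' (S : Set (Finset (Fin n))) :=
      fun G hG => Set.mem_image_of_mem _ hG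
    refine ⟨hflats.2 fun G hG => ⟨hS.isFlat G (hmem G hG), hS.nonempty G (hmem G hG),
      hS.connected G (hmem G hG)⟩, fun T hTS hT hTanti => ?_⟩
    rw [hjoin (fun G hG => hS.nonempty G (hmem G hG)) T hTS hT]
    exact hS.not_connected_closure _ (Set.image_mono (Finset.coe_subset.2 hTS))
      ((Finset.one_lt_card_iff_nontrivial.1 hT).image Finset.coe_injective)
      (isAntichain_coe_image_iff.2 hTanti)

theorem sum_sum_mul_indVec (S : Finset (Finset (Fin n))) (c : Finset (Fin n) → ℝ)
    (B : Finset (Fin n)) :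
    ∑ i ∈ B, ∑ G ∈ S, c G * indVec G i = ∑ G ∈ S, c G * (B ∩ G).card := by
  rw [Finset.sum_comm]
  simp [indVec, Finset.sum_ite_mem, mul_comm]

theorem card_inter_le_rk (hB : B ∈ M.bases) : (B ∩ G).card ≤ M.rk G := by
  have hindep : M.toMatroid.Indep (B ∩ G : Set (Fin n)) :=
    ((M.presents_toMatroid B).1 hB).indep.subset Set.inter_subset_left
  rw [rk, ← Nat.cast_le (α := ℕ∞), M.presents_toMatroid.famRk_eq,
    ← Set.encard_coe_eq_coe_finsetCard, Finset.coe_inter]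
  exact hindep.encard_le_eRk_of_subset Set.inter_subset_right

/-- Each `|B ∩ G|` is at most `rk G`; as some basis attains all these bounds simultaneously, the
maximal bases are those attaining all of them. -/
theorem mem_maxBases_iff_forall_card_inter_eq_rk (hc : ∀ G ∈ S, 0 < c G)
    (hex : ∃ B ∈ M.bases, ∀ G ∈ S, (B ∩ G).card = M.rk G) :
    B ∈ M.maxBases (fun i => ∑ G ∈ S, c G * indVec G i) ↔
      B ∈ M.bases ∧ ∀ G ∈ S, (B ∩ G).card = M.rk G := by
  have hle : ∀ B ∈ M.bases, ∀ G ∈ S, c G * ((B ∩ G).card : ℝ) ≤ c G * M.rk G :=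
    fun B hB G hG => mul_le_mul_of_nonneg_left (mod_cast card_inter_le_rk hB) (hc G hG).le
  obtain ⟨B₀, hB₀, hrk⟩ := hex
  have hsum₀ : ∑ G ∈ S, c G * ((B₀ ∩ G).card : ℝ) = ∑ G ∈ S, c G * M.rk G :=
    Finset.sum_congr rfl fun G hG => by rw [hrk G hG]
  simp only [maxBases, Finset.mem_filter, sum_sum_mul_indVec]
  refine and_congr_right fun hB => ⟨fun hmax G hG => ?_, fun h B' hB' => ?_⟩
  · have hsum : ∑ G ∈ S, c G * ((B ∩ G).card : ℝ) = ∑ G ∈ S, c G * M.rk G :=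
      (Finset.sum_le_sum (hle B hB)).antisymm (hsum₀ ▸ hmax B₀ hB₀)
    have hG' := (Finset.sum_eq_sum_iff_of_le (hle B hB)).1 hsum G hG
    exact_mod_cast mul_left_cancel₀ (hc G hG).ne' hG'
  · refine Finset.sum_le_sum fun G hG => ?_
    rw [h G hG]
    exact hle B' hB' G hG

section Loopless

variable [M.toMatroid.Loopless]

theorem gradedSum_isBase_iff_card_inter_eq_rk
    (hS : IsNestedFamily M.toMatroid ((↑) '' (S : Set (Finset (Fin n)))))
    (hu : Finset.univ ∈ S) :
    hS.gradedSum.IsBase B ↔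
      B ∈ M.bases ∧ ∀ G ∈ S.erase Finset.univ, (B ∩ G).card = M.rk G := by
  have hrk : B ∈ M.bases → ∀ G, (B ∩ G).card = M.rk G ↔
      M.toMatroid.IsBasis (B ∩ G : Set (Fin n)) G := fun hB G =>
    M.presents_toMatroid.card_inter_eq_famRk_iff (Set.subset_univ _) ((M.presents_toMatroid B).1 hB)
  have huniv : M.toMatroid.IsBasis (B ∩ (Finset.univ : Finset (Fin n)) : Set (Fin n))
      (Finset.univ : Finset (Fin n)) ↔ B ∈ M.bases := by
    rw [Finset.coe_univ, Set.inter_univ, M.presents_toMatroid B]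
    exact Matroid.isBasis_ground_iff
  have hBS : (B : Set (Fin n)) ⊆ ⋃₀ ((↑) '' (S : Set (Finset (Fin n)))) :=
    sUnion_coe_image_eq_univ hu ▸ Set.subset_univ _
  rw [hS.gradedSum_isBase_iff, and_iff_left hBS, Set.forall_mem_image]
  constructor
  · intro h
    have hB : B ∈ M.bases := huniv.1 (h hu)
    exact ⟨hB, fun G hG => (hrk hB G).2 (h (Finset.mem_of_mem_erase hG))⟩
  · rintro ⟨hB, h⟩ G hG
    obtain rfl | hne := eq_or_ne G Finset.univ
    · exact huniv.2 hB
    · exact (hrk hB G).1 (h G (Finset.mem_erase.2 ⟨hne, hG⟩))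

theorem presents_gradedSum_maxBases
    (hS : IsNestedFamily M.toMatroid ((↑) '' (S : Set (Finset (Fin n)))))
    (hu : Finset.univ ∈ S) (hc : ∀ G ∈ S.erase Finset.univ, 0 < c G) :
    Presents (M.maxBases (fun i => ∑ G ∈ S.erase Finset.univ, c G * indVec G i))
      hS.gradedSum := by
  obtain ⟨B₀, hB₀⟩ := hS.gradedSum.exists_isBase
  lift B₀ to Finset (Fin n) using Set.toFinite B₀
  intro B
  rw [gradedSum_isBase_iff_card_inter_eq_rk hS hu, mem_maxBases_iff_forall_card_inter_eq_rk hc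
    ⟨B₀, (gradedSum_isBase_iff_card_inter_eq_rk hS hu).1 hB₀⟩]

theorem famNumComponents_maxBases_eq_card_iff
    (hS : IsNestedFamily M.toMatroid ((↑) '' (S : Set (Finset (Fin n)))))
    (hu : Finset.univ ∈ S) (hc : ∀ G ∈ S.erase Finset.univ, 0 < c G) :
    famNumComponents (M.maxBases (fun i => ∑ G ∈ S.erase Finset.univ, c G * indVec G i)) =
        S.card ↔
      ∀ G ∈ ((↑) '' (S : Set (Finset (Fin n))) : Set (Set (Fin n))), CircuitConnected
        ((M.toMatroid ↾ G) ／ lower ((↑) '' (S : Set (Finset (Fin n)))) G) := by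
  have huniv := sUnion_coe_image_eq_univ hu
  rw [← hS.card_quot_circuitRel_gradedSum huniv, famNumComponents,
    (presents_gradedSum_maxBases hS hu hc).famConnRel_eq (hS.gradedSum_ground.trans huniv),
    Set.ncard_image_of_injective _ Finset.coe_injective, Set.ncard_coe_finset]

theorem forall_famNumComponents_maxBases_eq_card_iff :
    (∀ S : Finset (Finset (Fin n)), M.IsNested M.connectedFlats S → Finset.univ ∈ S →
      ∀ c : Finset (Fin n) → ℝ, (∀ G ∈ S.erase Finset.univ, 0 < c G) →
        famNumComponents (M.maxBases
          (fun i => ∑ G ∈ S.erase Finset.univ, c G * indVec G i)) = S.card) ↔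
      ∀ S, IsNestedFamily M.toMatroid S → M.toMatroid.E ∈ S →
        ∀ G ∈ S, CircuitConnected ((M.toMatroid ↾ G) ／ lower S G) := by
  have hground : ∀ S : Finset (Finset (Fin n)), Finset.univ ∈ S ↔
      M.toMatroid.E ∈ ((↑) '' (S : Set (Finset (Fin n))) : Set (Set (Fin n))) := fun S => by
    rw [show M.toMatroid.E = (Finset.univ : Finset (Fin n)) from Finset.coe_univ.symm,
      Finset.coe_injective.mem_set_image, Finset.mem_coe]
  constructor
  · intro h S hS hu
    obtain ⟨S, rfl⟩ := Set.subset_range_iff_exists_image_eq.1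
      (fun G _ => ⟨(Set.toFinite G).toFinset, Set.Finite.coe_toFinset _⟩ :
        S ⊆ Set.range ((↑) : Finset (Fin n) → Set (Fin n)))
    lift S to Finset (Finset (Fin n)) using Set.toFinite S
    rw [← hground] at hu
    exact (famNumComponents_maxBases_eq_card_iff hS hu (c := 1) fun _ _ => one_pos).1
      (h S (isNested_connectedFlats_iff.2 hS) hu 1 fun _ _ => one_pos)
  · intro h S hS hu c hc
    rw [isNested_connectedFlats_iff] at hS
    exact (famNumComponents_maxBases_eq_card_iff hS hu hc).2 (h _ hS ((hground S).1 hu))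

end Loopless

end FinMatroid

/-- For a connected matroid `M` of rank `r` on `[n]`, `n ≥ 2`, with
`𝓖min` the minimal building set of connected flats, the following are equivalent:
(a) for all flats `F ⊊ G` with `M|G` connected, `(M|G)/F` is connected;
(b) for every nested set `S ∋ [n]` with respect to `𝓖min` and every
`w = ∑_{G ∈ S, G ≠ [n]} c_G e_G` with `c_G > 0`, the matroid `M_w` has exactly `|S|`
connected components (i.e. the nested set complex equals the Bergman complex). -/
theorem statement17 {n r : ℕ} (M : FinMatroid n r) (hn : 2 ≤ n)
    (hconn : M.Connected) (𝓖min : Set (Finset (Fin n)))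
    (hGmin : 𝓖min = {G : Finset (Fin n) |
      M.IsFlat G ∧ G ≠ ∅ ∧ FamConnectedOn (M.restrictBases G) G}) :
    (∀ F G : Finset (Fin n), M.IsFlat F → M.IsFlat G → F ⊂ G →
        FamConnectedOn (M.restrictBases G) G →
        FamConnectedOn (famContractBases (M.restrictBases G) F) (G \ F)) ↔
      (∀ S : Finset (Finset (Fin n)), M.IsNested 𝓖min S → Finset.univ ∈ S →
        ∀ c : Finset (Fin n) → ℝ, (∀ G ∈ S.erase Finset.univ, 0 < c G) →
          famNumComponents (M.maxBases
            (fun i => ∑ G ∈ S.erase Finset.univ, c G * indVec G i)) = S.card) := by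
  obtain rfl : 𝓖min = M.connectedFlats := hGmin
  have hcc : CircuitConnected M.toMatroid := hconn.circuitConnected
  have : Nontrivial (Fin n) := Fin.nontrivial_iff_two_le.2 hn
  have : M.toMatroid.Loopless := hcc.loopless Set.nontrivial_univ
  calc
    _ ↔ ∀ F G, M.toMatroid.IsFlat F → M.toMatroid.IsFlat G → F ⊂ G →
          CircuitConnected (M.toMatroid ↾ G) → CircuitConnected ((M.toMatroid ↾ G) ／ F) :=
      FinMatroid.forall_famConnectedOn_contractBases_iff
    _ ↔ ∀ S, IsNestedFamily M.toMatroid S → M.toMatroid.E ∈ S →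
          ∀ G ∈ S, CircuitConnected ((M.toMatroid ↾ G) ／ lower S G) :=
      forall_contract_circuitConnected_iff hcc
    _ ↔ _ := FinMatroid.forall_famNumComponents_maxBases_eq_card_iff.symm
end

section
/- Let 𝓕 be a building set in the Boolean lattice 2^[r] with [r] ∈ 𝓕, and let S ⊆ 𝓕 ∖ {[r]} be nested with respect to 𝓕. Then: (i) any two members of S are either disjoint or comparable by inclusion; (ii) |S| ≤ r − 1; and (iii) if S is maximal under inclusion among subsets of 𝓕 ∖ {[r]} nested with respect to 𝓕, then |S| = r − 1. -/
open Finset Pointwise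

/-!
Injectivity of the union map makes the maximal members of a building set below `X` disjoint, so
the union of two intersecting members is again a member (take `X` to be that union).

A nonempty subfamily of a nested family whose union lies in the building set contains that union,
so every member `A` of a nested family `N` strictly contains the union of the members of `N`
strictly below it: some `x` has `A` as the smallest member of `N` containing it. As nested
families are laminar, sending `x` to the smallest member of `N` containing `x` is a well-defined
map from `⋃ N` onto `N`. If two points `x ≠ y` have the same image `A`, a largest member of the
building set inside `A` that contains `y` but not `x` can be added to `N`; hence the map is a
bijection when `N` is maximal. Finally, the maximal members of the building set can be added to
any nested family, and they cover the ground set.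
-/

section Laminar

variable {α : Type*} [DecidableEq α]

/-- A family of finite sets is laminar if any two members are disjoint or comparable. -/
def IsLaminar (N : Finset (Finset α)) : Prop :=
  ∀ A ∈ N, ∀ B ∈ N, A ∩ B = ∅ ∨ A ⊆ B ∨ B ⊆ A

namespace IsLaminar

variable {N : Finset (Finset α)} {A : Finset α} {x : α}

lemma isLeast_of_minimal (hN : IsLaminar N) (hA : Minimal (fun B => B ∈ N ∧ x ∈ B) A) :
    IsLeast {B | B ∈ N ∧ x ∈ B} A := by
  refine ⟨hA.prop, fun B hB => ?_⟩
  rcases hN A hA.prop.1 B hB.1 with hdisj | hAB | hBA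
  · exact absurd hdisj (ne_empty_of_mem (mem_inter.2 ⟨hA.prop.2, hB.2⟩))
  · exact hAB
  · exact hA.le_of_le hB hBA

lemma exists_isLeast_of_mem_sup (hN : IsLaminar N) (hx : x ∈ N.sup id) :
    ∃ A, IsLeast {B | B ∈ N ∧ x ∈ B} A := by
  obtain ⟨B, hB, hxB⟩ := mem_sup.1 hx
  obtain ⟨A, -, hA⟩ := exists_minimal_le_of_wellFoundedLT (fun B => B ∈ N ∧ x ∈ B) B ⟨hB, hxB⟩
  exact ⟨A, hN.isLeast_of_minimal hA⟩

end IsLaminar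

end Laminar

section BuildingSet

variable {α : Type*} [DecidableEq α]

/-- The combinatorial form of a building set in the Boolean lattice of finite subsets of `α`:
a family of nonempty sets that contains the singletons and is closed under unions of
intersecting members. -/
structure IsBuildingSet (𝓕 : Set (Finset α)) : Prop where
  nonempty_of_mem : ∀ A ∈ 𝓕, A.Nonempty
  singleton_mem : ∀ a, {a} ∈ 𝓕
  union_mem : ∀ A ∈ 𝓕, ∀ B ∈ 𝓕, ¬Disjoint A B → A ∪ B ∈ 𝓕

/-- A family `N ⊆ 𝓕` is nested with respect to `𝓕` if it contains the union of each nonempty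
subfamily whose union lies in `𝓕`. This is equivalent to the usual condition on unions of
antichains, see `boolNested_iff_isNested`. -/
structure IsNested (𝓕 : Set (Finset α)) (N : Finset (Finset α)) : Prop where
  mem_of_mem : ∀ A ∈ N, A ∈ 𝓕
  sup_mem : ∀ T ⊆ N, T.Nonempty → T.sup id ∈ 𝓕 → T.sup id ∈ T

namespace IsNested

variable {𝓕 : Set (Finset α)} {N N' : Finset (Finset α)} {A C : Finset α} {x y : α}

lemma mono (hN : IsNested 𝓕 N) (h : N' ⊆ N) : IsNested 𝓕 N' where
  mem_of_mem A hA := hN.mem_of_mem A (h hA)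
  sup_mem T hT := hN.sup_mem T (hT.trans h)

lemma isLaminar (h𝓕 : IsBuildingSet 𝓕) (hN : IsNested 𝓕 N) : IsLaminar N := by
  intro A hA B hB
  rw [← disjoint_iff_inter_eq_empty, or_iff_not_imp_left]
  intro hAB
  have hsup : ({A, B} : Finset (Finset α)).sup id = A ∪ B := by simp
  have hmem : A ∪ B ∈ ({A, B} : Finset (Finset α)) := by
    rw [← hsup]
    refine hN.sup_mem _ (insert_subset hA (singleton_subset_iff.2 hB)) (insert_nonempty _ _) ?_
    exact hsup ▸ h𝓕.union_mem A (hN.mem_of_mem A hA) B (hN.mem_of_mem B hB) hAB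
  rw [mem_insert, mem_singleton] at hmem
  rcases hmem with h | h
  · exact Or.inr (union_eq_left.1 h)
  · exact Or.inl (union_eq_right.1 h)

lemma exists_isLeast (h𝓕 : IsBuildingSet 𝓕) (hN : IsNested 𝓕 N) (hA : A ∈ N) :
    ∃ x, IsLeast {B | B ∈ N ∧ x ∈ B} A := by
  by_contra! hno
  set T := {B ∈ N | B ⊂ A}
  have hcover : A ⊆ T.sup id := by
    intro x hx
    by_contra hxT
    refine hno x ((hN.isLaminar h𝓕).isLeast_of_minimal ?_)
    refine minimal_iff_forall_lt.2 ⟨⟨hA, hx⟩, fun B hBA hB => hxT ?_⟩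
    exact mem_sup.2 ⟨B, mem_filter.2 ⟨hB.1, hBA⟩, hB.2⟩
  have hsup : T.sup id = A :=
    (Finset.sup_le fun B hB => (mem_filter.1 hB).2.subset).antisymm hcover
  have hT : T.Nonempty := by
    obtain ⟨x, hx⟩ := h𝓕.nonempty_of_mem A (hN.mem_of_mem A hA)
    obtain ⟨B, hB, -⟩ := mem_sup.1 (hcover hx)
    exact ⟨B, hB⟩
  have hAT : A ∈ T := by
    simpa only [hsup] using
      hN.sup_mem T (filter_subset _ _) hT (hsup ▸ hN.mem_of_mem A hA)
  exact (mem_filter.1 hAT).2.ne rfl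

theorem card_le_card_sup (h𝓕 : IsBuildingSet 𝓕) (hN : IsNested 𝓕 N) : #N ≤ #(N.sup id) := by
  refine card_le_card_of_forall_subsingleton (fun A x => IsLeast {B | B ∈ N ∧ x ∈ B} A)
    (fun A hA => ?_) fun x _ A hA B hB => hA.2.unique hB.2
  obtain ⟨x, hx⟩ := hN.exists_isLeast h𝓕 hA
  exact ⟨x, mem_sup.2 ⟨A, hx.1⟩, hx⟩

lemma insert_of_maximal (h𝓕 : IsBuildingSet 𝓕) (hN : IsNested 𝓕 N)
    (hA : IsLeast {B | B ∈ N ∧ x ∈ B} A)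
    (hC : Maximal (fun C => C ∈ 𝓕 ∧ C ⊆ A ∧ y ∈ C ∧ x ∉ C) C) :
    IsNested 𝓕 (insert C N) := by
  obtain ⟨hC𝓕, hCA, hyC, hxC⟩ := hC.prop
  refine ⟨(forall_mem_insert _ _ _).2 ⟨hC𝓕, hN.mem_of_mem⟩, fun T hT hTne hsup => ?_⟩
  by_cases hCT : C ∈ T
  swap
  · exact hN.sup_mem T ((subset_insert_iff_of_notMem hCT).1 hT) hTne hsup
  have hle : ∀ B ∈ T, B ⊆ T.sup id := fun B hB => le_sup (f := id) hB
  have hTN : T.erase C ⊆ N := subset_insert_iff.1 hT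
  -- Replacing `C` by `A ⊇ C` in `T` gives a subfamily of `N`, with union `A ∪ ⋃ T`.
  have hsup' : (insert A (T.erase C)).sup id = A ∪ T.sup id := by
    rw [← insert_erase hCT, erase_insert_eq_erase, sup_insert, sup_insert]
    simp [← union_assoc, union_eq_left.2 hCA]
  have hmem : A ∪ T.sup id ∈ insert A (T.erase C) := by
    rw [← hsup']
    refine hN.sup_mem _ (insert_subset hA.1.1 hTN) (insert_nonempty _ _) (hsup' ▸ ?_)
    exact h𝓕.union_mem A (hN.mem_of_mem A hA.1.1) _ hsup
      (not_disjoint_iff.2 ⟨y, hCA hyC, hle C hCT hyC⟩)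
  rcases mem_insert.1 hmem with h | h
  · have hsupA : T.sup id ⊆ A := union_eq_left.1 h
    by_cases hx : x ∈ T.sup id
    · obtain ⟨B, hB, hxB⟩ := mem_sup.1 hx
      have hBN : B ∈ N := hTN (mem_erase.2 ⟨fun hBC => hxC (hBC ▸ hxB), hB⟩)
      rwa [(hsupA.trans (hA.2 ⟨hBN, hxB⟩)).antisymm (hle B hB)]
    · rwa [← hC.eq_of_le ⟨hsup, hsupA, hle C hCT hyC, hx⟩ (hle C hCT)]
  · have hUT : A ∪ T.sup id ∈ T := mem_of_mem_erase h
    rwa [(hle _ hUT).antisymm subset_union_right] at hUT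

lemma eq_of_isLeast_of_maximal (h𝓕 : IsBuildingSet 𝓕) (hN : Maximal (IsNested 𝓕) N)
    (hx : IsLeast {B | B ∈ N ∧ x ∈ B} A) (hy : IsLeast {B | B ∈ N ∧ y ∈ B} A) : x = y := by
  by_contra hxy
  have hfin : {C | C ∈ 𝓕 ∧ C ⊆ A ∧ y ∈ C ∧ x ∉ C}.Finite :=
    A.powerset.finite_toSet.subset fun C hC => mem_powerset.2 hC.2.1
  obtain ⟨C, hC⟩ := hfin.exists_maximal
    ⟨{y}, h𝓕.singleton_mem y, singleton_subset_iff.2 hy.1.2, mem_singleton_self y,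
      notMem_singleton.2 hxy⟩
  have hCN : C ∈ N := hN.le_of_ge (hN.prop.insert_of_maximal h𝓕 hx hC) (subset_insert C N)
    (mem_insert_self C N)
  exact hC.prop.2.2.2 (hy.2 ⟨hCN, hC.prop.2.2.1⟩ hx.1.2)

theorem card_eq_card_sup_of_maximal (h𝓕 : IsBuildingSet 𝓕) (hN : Maximal (IsNested 𝓕) N) :
    #N = #(N.sup id) := by
  refine (hN.prop.card_le_card_sup h𝓕).antisymm ?_
  refine card_le_card_of_forall_subsingleton (fun x A => IsLeast {B | B ∈ N ∧ x ∈ B} A)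
    (fun x hx => ?_) fun A _ x hx y hy => eq_of_isLeast_of_maximal h𝓕 hN hx.2 hy.2
  obtain ⟨A, hA⟩ := (hN.prop.isLaminar h𝓕).exists_isLeast_of_mem_sup hx
  exact ⟨A, hA.1.1, hA⟩

end IsNested

end BuildingSet

section BoolBuilding

lemma pairwise_disjoint_of_injective_sup {ι α : Type*} [Fintype ι] [DecidableEq α]
    {g : ι → Finset α}
    (h : Function.Injective fun y : ∀ i, {F : Finset α // F ⊆ g i} => univ.sup fun i => (y i).1) :
    Pairwise fun i j => Disjoint (g i) (g j) := by
  classical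
  intro i j hij
  -- Shrinking `g i` to `g i \ g j` does not change the union.
  let full : ∀ i, {F : Finset α // F ⊆ g i} := fun i => ⟨g i, Subset.rfl⟩
  let shrunk := Function.update full i ⟨g i \ g j, sdiff_subset⟩
  have hsup : (univ.sup fun k => (shrunk k).1) = univ.sup fun k => (full k).1 := by
    refine (sup_mono_fun fun k _ => (shrunk k).2).antisymm (Finset.sup_le fun k _ => ?_)
    have hle : ∀ k, (shrunk k).1 ⊆ univ.sup fun k => (shrunk k).1 := fun k =>
      le_sup (f := fun k => (shrunk k).1) (mem_univ k)
    obtain rfl | hk := eq_or_ne k i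
    · have hi : g k \ g j ⊆ univ.sup fun k => (shrunk k).1 := by simpa [shrunk] using hle k
      have hj : g j ⊆ univ.sup fun k => (shrunk k).1 := by
        simpa [shrunk, full, hij.symm] using hle j
      exact (sdiff_le_iff.1 hi).trans (union_subset hj Subset.rfl)
    · simpa [shrunk, full, hk] using hle k
  have hgi : g i \ g j = g i := by
    simpa [shrunk, full] using congrArg Subtype.val (congrFun (h hsup) i)
  exact sdiff_eq_self_iff_disjoint.1 hgi

lemma sup_filter_maximal {β : Type*} [SemilatticeSup β] [OrderBot β] (T : Finset β)
    [DecidablePred fun B => Maximal (· ∈ T) B] :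
    {B ∈ T | Maximal (· ∈ T) B}.sup id = T.sup id := by
  refine le_antisymm (sup_mono (filter_subset _ _)) (Finset.sup_le fun B hB => ?_)
  obtain ⟨M, hBM, hM⟩ := T.exists_le_maximal hB
  exact hBM.trans (le_sup (f := id) (mem_filter.2 ⟨hM.prop, hM⟩))

variable {r : ℕ} {𝓕 : Set (Finset (Fin r))} {S : Finset (Finset (Fin r))}

lemma BoolBuilding.isBuildingSet (h𝓕 : BoolBuilding 𝓕) : IsBuildingSet 𝓕 where
  nonempty_of_mem A hA := nonempty_iff_ne_empty.2 (h𝓕.1 A hA)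
  singleton_mem a := by
    obtain ⟨k, g, -, hg, -, -, e, he⟩ := h𝓕.2 {a} (singleton_ne_empty a)
    obtain ⟨y, hy⟩ := e.surjective ⟨{a}, Subset.rfl⟩
    have ha : a ∈ univ.sup fun i => (y i).1 := by simp [← he y, hy]
    obtain ⟨i, -, hi⟩ := mem_sup.1 ha
    have hgi : g i = {a} := (hg i).2.antisymm (singleton_subset_iff.2 ((y i).2 hi))
    exact hgi ▸ (hg i).1
  union_mem A hA B hB hAB := by
    obtain ⟨x, hxA, hxB⟩ := not_disjoint_iff.1 hAB
    obtain ⟨k, g, -, hg, -, hcover, e, he⟩ :=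
      h𝓕.2 (A ∪ B) (ne_empty_of_mem (mem_union_left B hxA))
    have hinj : Function.Injective fun y : ∀ i, {F : Finset (Fin r) // F ⊆ g i} =>
        univ.sup fun i => (y i).1 := by
      simpa only [← he, Function.comp_def] using Subtype.val_injective.comp e.injective
    obtain ⟨i, hi⟩ := hcover A hA subset_union_left
    obtain ⟨j, hj⟩ := hcover B hB subset_union_right
    obtain rfl : i = j := by
      by_contra hij
      exact disjoint_left.1 (pairwise_disjoint_of_injective_sup hinj hij) (hi hxA) (hj hxB)
    have hgi : g i = A ∪ B := (hg i).2.antisymm (union_subset hi hj)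
    exact hgi ▸ (hg i).1

theorem boolNested_iff_isNested : BoolNested 𝓕 S ↔ IsNested 𝓕 S := by
  refine ⟨fun h => ⟨h.1, fun T hT hTne hsup => ?_⟩, fun h => ⟨h.mem_of_mem, ?_⟩⟩
  · classical
    set M := {B ∈ T | Maximal (· ∈ T) B}
    have hMsup : M.sup id = T.sup id := sup_filter_maximal T
    have hMT : M ⊆ T := filter_subset _ _
    have hM : #M ≤ 1 := by
      by_contra! hM
      refine h.2 M (hMT.trans hT) hM (fun A hA B hB hne => ?_) (hMsup ▸ hsup)
      have hA := mem_filter.1 hA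
      have hB := mem_filter.1 hB
      exact ⟨fun hAB => hne (hA.2.eq_of_le hB.1 hAB),
        fun hBA => hne (hB.2.eq_of_le hA.1 hBA).symm⟩
    obtain ⟨B, hB⟩ := T.exists_maximal hTne
    have hBM : B ∈ M := mem_filter.2 ⟨hB.prop, hB⟩
    have hMB : M = {B} :=
      eq_singleton_iff_unique_mem.2 ⟨hBM, fun C hC => card_le_one.1 hM C hC B hBM⟩
    have hsupB : T.sup id = B := by
      rw [← hMsup, hMB, sup_singleton, id]
    exact hsupB ▸ hB.prop
  · intro T hT hcard hanti hsup
    have hTne : T.Nonempty := card_pos.1 (by lia)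
    have hmem := h.sup_mem T hT hTne hsup
    obtain ⟨B, hB, hne⟩ := exists_mem_ne hcard (T.sup id)
    exact (hanti B hB _ hmem hne).1 (le_sup (f := id) hB)

end BoolBuilding

section MaximalMembers

variable {α : Type*} [Fintype α] {𝓕 : Set (Finset α)}

open scoped Classical in
/-- The maximal members of a family `𝓕` of subsets of a finite type. For a building set they
partition the ground set and play the role of the top element `univ`. -/
noncomputable def maximalMembers (𝓕 : Set (Finset α)) : Finset (Finset α) :=
  {M | Maximal (· ∈ 𝓕) M}

lemma mem_maximalMembers {M : Finset α} : M ∈ maximalMembers 𝓕 ↔ Maximal (· ∈ 𝓕) M := by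
  simp [maximalMembers]

lemma maximalMembers_eq_singleton_univ (h : univ ∈ 𝓕) : maximalMembers 𝓕 = {univ} := by
  ext M
  rw [mem_maximalMembers, mem_singleton]
  refine ⟨fun hM => hM.eq_of_le h (subset_univ M), ?_⟩
  rintro rfl
  exact ⟨h, fun _ _ _ => subset_univ _⟩

variable [DecidableEq α] {N : Finset (Finset α)}

lemma IsBuildingSet.sup_maximalMembers (h𝓕 : IsBuildingSet 𝓕) :
    (maximalMembers 𝓕).sup id = univ := by
  refine eq_univ_iff_forall.2 fun x => ?_
  obtain ⟨M, hxM, hM⟩ := 𝓕.toFinite.exists_le_maximal (h𝓕.singleton_mem x)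
  exact mem_sup.2 ⟨M, mem_maximalMembers.2 hM, singleton_subset_iff.1 hxM⟩

lemma IsNested.union_maximalMembers (hN : IsNested 𝓕 N) :
    IsNested 𝓕 (N ∪ maximalMembers 𝓕) where
  mem_of_mem A hA :=
    (mem_union.1 hA).elim (hN.mem_of_mem A) fun h => (mem_maximalMembers.1 h).prop
  sup_mem T hT hTne hsup := by
    by_cases hTN : T ⊆ N
    · exact hN.sup_mem T hTN hTne hsup
    · obtain ⟨M, hMT, hMN⟩ := not_subset.1 hTN
      have hM := mem_maximalMembers.1 ((mem_union.1 (hT hMT)).resolve_left hMN)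
      rwa [← hM.eq_of_le hsup (le_sup (f := id) hMT)]

lemma IsNested.maximal_union_maximalMembers
    (hN : Maximal (fun N => IsNested 𝓕 N ∧ Disjoint N (maximalMembers 𝓕)) N) :
    Maximal (IsNested 𝓕) (N ∪ maximalMembers 𝓕) := by
  refine ⟨hN.prop.1.union_maximalMembers, fun N' hN' hle => ?_⟩
  have hsub : N ⊆ N' \ maximalMembers 𝓕 :=
    subset_sdiff.2 ⟨subset_union_left.trans hle, hN.prop.2⟩
  have heq : N = N' \ maximalMembers 𝓕 :=
    hN.eq_of_le ⟨hN'.mono sdiff_subset, sdiff_disjoint⟩ hsub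
  rw [heq, sdiff_union_of_subset (subset_union_right.trans hle)]

theorem statement19_general (h𝓕 : IsBuildingSet 𝓕) (hN : IsNested 𝓕 N)
    (hdisj : Disjoint N (maximalMembers 𝓕)) :
    IsLaminar N ∧ #N + #(maximalMembers 𝓕) ≤ Fintype.card α ∧
    (Maximal (fun N => IsNested 𝓕 N ∧ Disjoint N (maximalMembers 𝓕)) N →
      #N + #(maximalMembers 𝓕) = Fintype.card α) := by
  have hsup : (N ∪ maximalMembers 𝓕).sup id = univ := by
    rw [sup_union, h𝓕.sup_maximalMembers]
    exact sup_top_eq _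
  rw [← card_union_of_disjoint hdisj, ← card_univ, ← hsup]
  exact ⟨hN.isLaminar h𝓕, hN.union_maximalMembers.card_le_card_sup h𝓕, fun hmax =>
    IsNested.card_eq_card_sup_of_maximal h𝓕 (IsNested.maximal_union_maximalMembers hmax)⟩

end MaximalMembers

/-- Let `𝓕` be a building set in `2^[r]` with `[r] ∈ 𝓕` and let
`S ⊆ 𝓕 \ {[r]}` be nested with respect to `𝓕`.  Then (i) any two members of `S` are
disjoint or comparable; (ii) `|S| ≤ r - 1`; (iii) if `S` is maximal among nested
subsets of `𝓕 \ {[r]}`, then `|S| = r - 1`. -/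
theorem statement19 {r : ℕ} (𝓕 : Set (Finset (Fin r))) (hb : BoolBuilding 𝓕)
    (htop : Finset.univ ∈ 𝓕)
    (S : Finset (Finset (Fin r))) (hS : BoolNested 𝓕 S) (hSne : Finset.univ ∉ S) :
    (∀ A ∈ S, ∀ B ∈ S, A ∩ B = ∅ ∨ A ⊆ B ∨ B ⊆ A) ∧
    S.card ≤ r - 1 ∧
    ((∀ S' : Finset (Finset (Fin r)),
        BoolNested 𝓕 S' → Finset.univ ∉ S' → S ⊆ S' → S' = S) →
      S.card = r - 1) := by
  have h := statement19_general hb.isBuildingSet (boolNested_iff_isNested.1 hS)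
    (by simpa [maximalMembers_eq_singleton_univ htop] using hSne)
  simp only [maximalMembers_eq_singleton_univ htop, card_singleton, Fintype.card_fin,
    maximal_iff, disjoint_singleton_right, ← boolNested_iff_isNested] at h
  obtain ⟨hlaminar, hle, heq⟩ := h
  refine ⟨hlaminar, by lia, fun hmax => ?_⟩
  have hcard := heq ⟨⟨hS, hSne⟩, fun S' hS' hSS' => (hmax S' hS'.1 hS'.2 hSS').symm⟩
  lia
end
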